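/- arXiv:2209.05820 — 2 statements merged into one kernel-verified Lean document; each statement's English description precedes it below -/
import Mathlib

section
/- Aut₃(D) = Aut₃(D₄): the set of restrictions to D₃ of order automorphisms of (D, ⊑) coincides with the set of restrictions to D₃ of order automorphisms of D₄; moreover this group Aut₃(D₄) has exactly 768 elements. -/
/-- A finite digraph: a finite nonempty vertex set `Fin n` with a (Bool-valued)
edge relation, loops allowed. -/
structure FinDigraph where
  n : ℕ
  pos : 0 < n
  adj : Fin n → Fin n → Bool

namespace FinDigraph

/-- Isomorphism of finite digraphs. -/
def Iso (G H : FinDigraph) : Prop :=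
  ∃ e : Fin G.n ≃ Fin H.n, ∀ u v, H.adj (e u) (e v) = G.adj u v

theorem iso_refl (G : FinDigraph) : Iso G G := ⟨Equiv.refl _, fun _ _ => rfl⟩

theorem iso_symm {G H : FinDigraph} (h : Iso G H) : Iso H G := by
  obtain ⟨e, he⟩ := h
  refine ⟨e.symm, fun u v => ?_⟩
  rw [← he (e.symm u) (e.symm v), e.apply_symm_apply, e.apply_symm_apply]

theorem iso_trans {G H K : FinDigraph} (hGH : Iso G H) (hHK : Iso H K) : Iso G K := by
  obtain ⟨e, he⟩ := hGH
  obtain ⟨f, hf⟩ := hHK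
  exact ⟨e.trans f, fun u v => (hf (e u) (e v)).trans (he u v)⟩

instance isoSetoid : Setoid FinDigraph :=
  ⟨Iso, iso_refl, fun h => iso_symm h, fun h h' => iso_trans h h'⟩

/-- `Emb G H` : `G` is isomorphic to an induced subdigraph of `H`. -/
def Emb (G H : FinDigraph) : Prop :=
  ∃ f : Fin G.n ↪ Fin H.n, ∀ u v, H.adj (f u) (f v) = G.adj u v

end FinDigraph

/-- `D`: the isomorphism classes of finite digraphs. -/
def D : Type := Quotient FinDigraph.isoSetoid

/-- The isomorphism class of a finite digraph. -/
def toD (G : FinDigraph) : D := Quotient.mk _ G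

/-- The substructure (induced subdigraph) ordering `⊑` on `D`. -/
instance : LE D :=
  ⟨fun x y => ∃ G H : FinDigraph, x = toD G ∧ y = toD H ∧ FinDigraph.Emb G H⟩

/-- An order automorphism: a bijection such that `x ≤ y ↔ f x ≤ f y`. -/
def IsOrderAuto {α : Type*} [LE α] (f : α → α) : Prop :=
  Function.Bijective f ∧ ∀ x y : α, x ≤ y ↔ f x ≤ f y

/-- φ₁ on digraphs: complement the loop status of every vertex. -/
def phi1Fn (G : FinDigraph) : FinDigraph :=
  ⟨G.n, G.pos, fun u v => if u = v then !(G.adj u v) else G.adj u v⟩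

/-- Edge reversal: transpose the edge relation. -/
def revFn (G : FinDigraph) : FinDigraph :=
  ⟨G.n, G.pos, fun u v => G.adj v u⟩

/-- φ₂ on digraphs: toggle both edges between distinct loopless vertices joined
by both or neither of the two possible edges. -/
def phi2Fn (G : FinDigraph) : FinDigraph :=
  ⟨G.n, G.pos, fun u v =>
    if u ≠ v ∧ G.adj u u = false ∧ G.adj v v = false ∧ G.adj u v = G.adj v u then
      !(G.adj u v)
    else G.adj u v⟩

/-- φ₃ on digraphs: toggle both edges between distinct looped vertices joined
by both or neither of the two possible edges. -/
def phi3Fn (G : FinDigraph) : FinDigraph :=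
  ⟨G.n, G.pos, fun u v =>
    if u ≠ v ∧ G.adj u u = true ∧ G.adj v v = true ∧ G.adj u v = G.adj v u then
      !(G.adj u v)
    else G.adj u v⟩

/-- φ₄ on digraphs: reverse the single edge between distinct loopless vertices
joined by exactly one of the two possible edges. -/
def phi4Fn (G : FinDigraph) : FinDigraph :=
  ⟨G.n, G.pos, fun u v =>
    if u ≠ v ∧ G.adj u u = false ∧ G.adj v v = false ∧ G.adj u v ≠ G.adj v u then
      G.adj v u
    else G.adj u v⟩

/-- φ₅ on digraphs: reverse the single edge between distinct looped vertices
joined by exactly one of the two possible edges. -/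
def phi5Fn (G : FinDigraph) : FinDigraph :=
  ⟨G.n, G.pos, fun u v =>
    if u ≠ v ∧ G.adj u u = true ∧ G.adj v v = true ∧ G.adj u v ≠ G.adj v u then
      G.adj v u
    else G.adj u v⟩

/-- φ_π on digraphs: for each ordered pair `(u,v)` of distinct vertices with a loop at
`u` and no loop at `v`, replace its type `(Adj(u,v), Adj(v,u)) : Bool × Bool` by `π`
applied to it; everything else is unchanged. -/
def phiPiFn (π : Equiv.Perm (Bool × Bool)) (G : FinDigraph) : FinDigraph :=
  ⟨G.n, G.pos, fun u v =>
    if u = v then G.adj u v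
    else if G.adj u u = true ∧ G.adj v v = false then (π (G.adj u v, G.adj v u)).1
    else if G.adj u u = false ∧ G.adj v v = true then (π (G.adj v u, G.adj u v)).2
    else G.adj u v⟩

/-- The number of vertices of an isomorphism class. -/
def nVerts : D → ℕ :=
  Quotient.lift (fun G : FinDigraph => G.n) (fun _ _ h => by
    obtain ⟨e, -⟩ := h
    simpa using Fintype.card_congr e)

/-- `Dn n`: the classes of digraphs with at most `n` vertices (first `n` levels). -/
def Dn (n : ℕ) : Set D := {x : D | nVerts x ≤ n}

theorem mem_Dn_succ {n : ℕ} {x : D} (h : x ∈ Dn n) : x ∈ Dn (n + 1) :=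
  le_trans h (Nat.le_succ n)

/-- The set of lower covers of `x` in `(D, ⊑)`. -/
def lcov (x : D) : Set D :=
  {y : D | y ≤ x ∧ y ≠ x ∧ ∀ z : D, y ≤ z → z ≤ x → z = y ∨ z = x}

/-- `scount x` = number of classes sharing the lower-cover set of `x`. -/
noncomputable def scount (x : D) : ℕ := Nat.card {y : D // lcov y = lcov x}

/-- `Hset m` = `{(l(G), s(G)) : G ∈ D with exactly m vertices}`. -/
def Hset (m : ℕ) : Set (Set D × ℕ) :=
  {p : Set D × ℕ | ∃ x : D, nVerts x = m ∧ p = (lcov x, scount x)}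

/-- Element-wise action of a map of `Dn n` on a subset of `Dn n`. -/
def setImage {n : ℕ} (φ : ↥(Dn n) → ↥(Dn n)) (S : Set D) : Set D :=
  {z : D | ∃ (y : D) (h : y ∈ Dn n), y ∈ S ∧ z = ↑(φ ⟨y, h⟩)}

/-- Element-wise action of a map of `Dn n` on a set of pairs `(S, k)`. -/
def HsetImage {n : ℕ} (φ : ↥(Dn n) → ↥(Dn n)) (A : Set (Set D × ℕ)) : Set (Set D × ℕ) :=
  {p : Set D × ℕ | ∃ q ∈ A, p = (setImage φ q.1, q.2)}

/-- The swap permutation `σ(a,b) = (b,a)` of `Bool × Bool`. -/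
def sigmaSwap : Equiv.Perm (Bool × Bool) := Equiv.prodComm Bool Bool

/-- Restrictions to `D₃` of order automorphisms of `(D, ⊑)`. -/
def Aut3D : Set (↥(Dn 3) → ↥(Dn 3)) :=
  {g | ∃ φ : D → D, IsOrderAuto φ ∧ ∀ x : ↥(Dn 3), (↑(g x) : D) = φ ↑x}

/-- Restrictions to `D₃` of order automorphisms of `D₄`. -/
def Aut3D4 : Set (↥(Dn 3) → ↥(Dn 3)) :=
  {g | ∃ ψ : ↥(Dn 4) → ↥(Dn 4), IsOrderAuto ψ ∧
    ∀ x : ↥(Dn 3), (↑(g x) : D) = ↑(ψ ⟨↑x, mem_Dn_succ x.2⟩)}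

/-- Restrictions to `D₃` of order automorphisms of `D₄`, as order isomorphisms of `D₃`. -/
def Aut3D4Iso : Set (↥(Dn 3) ≃o ↥(Dn 3)) :=
  {g | ∃ ψ : ↥(Dn 4) → ↥(Dn 4), IsOrderAuto ψ ∧
    ∀ x : ↥(Dn 3), ((g x : ↥(Dn 3)) : D) = ↑(ψ ⟨↑x, mem_Dn_succ x.2⟩)}

/-!
A *recoding* permutes the two loop statuses and, depending on the loop statuses of two distinct
vertices, permutes the four possible types of the pair, compatibly with reading it in either order.
Recodings form a group of order `2 * 4 * 4 * 24 = 768` which acts on `D` by order automorphisms, and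
faithfully already on `D₃`. Conversely, an order automorphism of `D` or of `D_N`, `N ≥ 4`, agrees
with a recoding on `D₃`, for the following reasons.

* It preserves numbers of vertices, and it fixes each class of a single arc between vertices of
  equal loop status once it fixes the one-vertex classes: two different three-vertex digraphs, the
  transitive and the cyclic triangle, are built from that pair alone, whereas a symmetric pair
  builds only one. So after composition with a recoding it fixes all of `D₂`.
* A *cone* adds an apex of opposite loop status to a digraph of constant loop status. When the pairs
  from the apex have distinct types they label the base, and the three-vertex subcones (*wedges*)
  then determine it. On a wedge whose two apex types differ, the automorphism can only reverse the
  edge of the base.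
* The transitive tournament on four vertices contains no cyclic triangle, whereas every tournament
  on four vertices contains a transitive triangle. So both triangles are fixed. Cones over the
  cyclic triangle, in which every vertex has one arc in and one arc out, then force the reversals to
  be the same for all pairs of apex types, that is, to come from a recoding.
-/

/-! ### The order on `D` -/

theorem FinDigraph.Emb.iso {G H : FinDigraph} (h : G.Emb H) (hn : H.n ≤ G.n) : G.Iso H := by
  obtain ⟨f, hf⟩ := h
  have hcard : Fintype.card (Fin G.n) = Fintype.card (Fin H.n) :=
    (Fintype.card_le_of_embedding f).antisymm (by simpa using hn)
  exact ⟨.ofBijective f ((Fintype.bijective_iff_injective_and_card f).2 ⟨f.injective, hcard⟩), hf⟩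

namespace D

theorem toD_le_toD_iff {G H : FinDigraph} : toD G ≤ toD H ↔ G.Emb H := by
  refine ⟨?_, fun h => ⟨G, H, rfl, rfl, h⟩⟩
  rintro ⟨G', H', hG, hH, f, hf⟩
  obtain ⟨e, he⟩ : G.Iso G' := Quotient.exact hG
  obtain ⟨e', he'⟩ : H'.Iso H := Quotient.exact hH.symm
  exact ⟨e.toEmbedding.trans (f.trans e'.toEmbedding), fun u v =>
    (he' _ _).trans ((hf _ _).trans (he u v))⟩

theorem nVerts_pos (x : D) : 0 < nVerts x :=
  Quotient.inductionOn x FinDigraph.pos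

theorem nVerts_le_of_le {x y : D} (h : x ≤ y) : nVerts x ≤ nVerts y := by
  obtain ⟨G, H, rfl, rfl, f, -⟩ := h
  exact Fin.le_of_embedding f

theorem eq_of_le_of_nVerts_le {x y : D} (h : x ≤ y) (hn : nVerts y ≤ nVerts x) : x = y := by
  obtain ⟨G, H, rfl, rfl, hGH⟩ := h
  exact Quotient.sound (hGH.iso hn)

instance : PartialOrder D where
  le_refl x := Quotient.inductionOn x fun _ => toD_le_toD_iff.2 ⟨.refl _, fun _ _ => rfl⟩
  le_trans := by
    rintro _ _ _ ⟨G, H, rfl, rfl, f, hf⟩ ⟨H', K, hH, rfl, hH'K⟩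
    obtain ⟨g, hg⟩ := toD_le_toD_iff.1 (hH ▸ toD_le_toD_iff.2 hH'K)
    exact toD_le_toD_iff.2 ⟨f.trans g, fun u v => (hg _ _).trans (hf u v)⟩
  le_antisymm _ _ h h' := eq_of_le_of_nVerts_le h (nVerts_le_of_le h')

theorem strictMono_nVerts : StrictMono nVerts := fun _ _ h =>
  lt_of_not_ge fun hn => h.ne (eq_of_le_of_nVerts_le h.le hn)

/-- The class of the digraph on `Fin n` with adjacency matrix `A`. -/
def ofAdj {n : ℕ} [NeZero n] (A : Fin n → Fin n → Bool) : D :=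
  toD ⟨n, NeZero.pos n, A⟩

@[simp]
theorem nVerts_ofAdj {n : ℕ} [NeZero n] (A : Fin n → Fin n → Bool) : nVerts (ofAdj A) = n :=
  rfl

theorem ofAdj_le_ofAdj_iff {m n : ℕ} [NeZero m] [NeZero n] {B : Fin m → Fin m → Bool}
    {A : Fin n → Fin n → Bool} :
    ofAdj B ≤ ofAdj A ↔ ∃ f : Fin m → Fin n, f.Injective ∧ ∀ u v, A (f u) (f v) = B u v :=
  toD_le_toD_iff.trans
    ⟨fun ⟨f, hf⟩ => ⟨f, f.injective, hf⟩, fun ⟨f, hinj, hf⟩ => ⟨⟨f, hinj⟩, hf⟩⟩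

theorem exists_ofAdj_eq {n : ℕ} [NeZero n] {x : D} (hx : nVerts x = n) :
    ∃ A : Fin n → Fin n → Bool, ofAdj A = x := by
  obtain ⟨⟨m, hm, A⟩, rfl⟩ := Quotient.exists_rep x
  obtain rfl : m = n := hx
  exact ⟨A, rfl⟩

theorem exists_lt_nVerts_add_one_eq {x : D} (hx : 1 < nVerts x) :
    ∃ y < x, nVerts y + 1 = nVerts x := by
  obtain ⟨n, hn⟩ : ∃ n, nVerts x = n + 1 + 1 := ⟨nVerts x - 2, by lia⟩
  obtain ⟨A, rfl⟩ := exists_ofAdj_eq hn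
  have hle : ofAdj (fun u v => A (Fin.castSucc u) (Fin.castSucc v)) ≤ ofAdj A :=
    ofAdj_le_ofAdj_iff.2 ⟨_, Fin.castSucc_injective _, fun _ _ => rfl⟩
  exact ⟨_, hle.lt_of_ne fun h => absurd (congrArg nVerts h) (by simp), rfl⟩

theorem nVerts_le_of_strictMonoOn {s : Set D} (hs : IsLowerSet s) {f : D → D}
    (hf : StrictMonoOn f s) {x : D} (hx : x ∈ s) : nVerts x ≤ nVerts (f x) := by
  induction hn : nVerts x generalizing x with
  | zero => exact Nat.zero_le _
  | succ n ih =>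
    rcases n.eq_zero_or_pos with rfl | hpos
    · exact nVerts_pos _
    obtain ⟨y, hyx, hy⟩ := exists_lt_nVerts_add_one_eq (x := x) (by lia)
    exact (ih (hs hyx.le hx) (by lia)).trans_lt (strictMono_nVerts (hf (hs hyx.le hx) hx hyx))

theorem nVerts_map_eq {s : Set D} (hs : IsLowerSet s) {σ : Equiv.Perm D}
    (hmem : ∀ x, σ x ∈ s ↔ x ∈ s) (hσ : ∀ x ∈ s, ∀ y ∈ s, σ x ≤ σ y ↔ x ≤ y) {x : D}
    (hx : x ∈ s) : nVerts (σ x) = nVerts x := by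
  have hlt {a b : D} (ha : a ∈ s) (hb : b ∈ s) : σ a < σ b ↔ a < b := by
    simp only [lt_iff_le_not_ge, hσ _ ha _ hb, hσ _ hb _ ha]
  have hmem' (a : D) (ha : a ∈ s) : σ.symm a ∈ s := (hmem _).1 (by simpa using ha)
  apply le_antisymm
  · have hmono : StrictMonoOn σ.symm s := fun a ha b hb hab =>
      (hlt (hmem' a ha) (hmem' b hb)).1 (by simpa using hab)
    simpa using nVerts_le_of_strictMonoOn hs hmono ((hmem x).2 hx)
  · exact nVerts_le_of_strictMonoOn hs (fun a ha b hb => (hlt ha hb).2) hx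

theorem isLowerSet_Dn (n : ℕ) : IsLowerSet (Dn n) := fun _ _ h hx =>
  (nVerts_le_of_le h).trans hx

/-- The permutations of `D` that preserve the number of vertices and restrict to order automorphisms
of `Dn N`. -/
def levelAut (N : ℕ) : Subgroup (Equiv.Perm D) where
  carrier := {σ | (∀ x, nVerts (σ x) = nVerts x) ∧
    ∀ x ∈ Dn N, ∀ y ∈ Dn N, σ x ≤ σ y ↔ x ≤ y}
  one_mem' := ⟨fun _ => rfl, fun _ _ _ _ => Iff.rfl⟩
  mul_mem' := fun {σ τ} hσ hτ => ⟨fun x => (hσ.1 _).trans (hτ.1 x), fun x hx y hy =>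
    (hσ.2 _ ((hτ.1 x).trans_le hx) _ ((hτ.1 y).trans_le hy)).trans (hτ.2 x hx y hy)⟩
  inv_mem' := fun {σ} hσ => by
    have hn (x : D) : nVerts (σ⁻¹ x) = nVerts x := by simpa using (hσ.1 (σ⁻¹ x)).symm
    refine ⟨hn, fun x hx y hy => ?_⟩
    simpa using (hσ.2 _ ((hn x).trans_le hx) _ ((hn y).trans_le hy)).symm

namespace levelAut

variable {N : ℕ} {σ : Equiv.Perm D} {x y : D}

theorem nVerts_apply (hσ : σ ∈ levelAut N) (x : D) : nVerts (σ x) = nVerts x :=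
  hσ.1 x

theorem apply_mem_Dn_iff (hσ : σ ∈ levelAut N) {n : ℕ} : σ x ∈ Dn n ↔ x ∈ Dn n :=
  iff_of_eq (congrArg (· ≤ n) (nVerts_apply hσ x))

theorem apply_le_apply_iff (hσ : σ ∈ levelAut N) (hy : y ∈ Dn N) : σ x ≤ σ y ↔ x ≤ y := by
  have hx (h : x ≤ y ∨ σ x ≤ σ y) : x ∈ Dn N := by
    rcases h with h | h
    · exact isLowerSet_Dn N h hy
    · exact (apply_mem_Dn_iff hσ).1 (isLowerSet_Dn N h ((apply_mem_Dn_iff hσ).2 hy))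
  exact ⟨fun h => (hσ.2 x (hx (.inr h)) y hy).1 h, fun h => (hσ.2 x (hx (.inl h)) y hy).2 h⟩

theorem le_apply_iff_of_fixed (hσ : σ ∈ levelAut N) (hy : y ∈ Dn N) (hx : σ x = x) :
    x ≤ σ y ↔ x ≤ y := by
  rw [← apply_le_apply_iff hσ hy, hx]

theorem exists_le_of_le_apply (hσ : σ ∈ levelAut N) (hy : y ∈ Dn N) (h : x ≤ σ y) :
    ∃ z ≤ y, σ z = x := by
  obtain ⟨z, rfl⟩ := σ.surjective x
  exact ⟨z, (apply_le_apply_iff hσ hy).1 h, rfl⟩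

end levelAut

end D

/-! ### Recodings -/

/-- The type of the ordered pair `(u, v)`: which of the edges `u → v` and `v → u` are present. -/
def edgeType {V : Type*} (A : V → V → Bool) (u v : V) : Bool × Bool :=
  (A u v, A v u)

theorem edgeType_swap {V : Type*} (A : V → V → Bool) (u v : V) :
    (edgeType A u v).swap = edgeType A v u :=
  rfl

theorem adj_ext {V : Type*} {A B : V → V → Bool} (hloop : ∀ u, A u u = B u u)
    (hedge : ∀ u v, u ≠ v → edgeType A u v = edgeType B u v) : A = B := by
  funext u v
  rcases eq_or_ne u v with rfl | huv
  · exact hloop u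
  · exact congrArg Prod.fst (hedge u v huv)

/-- A rule for rewriting digraphs on a fixed vertex set: `loop` rewrites the loop status of each
vertex, and `edge l m` rewrites the type `(A u v, A v u)` of each pair of distinct vertices `u`, `v`
with loop statuses `l`, `m`. The field `edge_swap` says that the outcome does not depend on the
order in which the two vertices are read. -/
@[ext]
structure Recoding where
  loop : Equiv.Perm Bool
  edge : Bool → Bool → Equiv.Perm (Bool × Bool)
  edge_swap : ∀ l m p, edge m l p.swap = (edge l m p).swap

namespace Recoding

instance : Mul Recoding where
  mul g h :=
    { loop := g.loop * h.loop
      edge := fun l m => g.edge (h.loop l) (h.loop m) * h.edge l m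
      edge_swap := fun l m p => by simp only [Equiv.Perm.mul_apply, edge_swap] }

instance : One Recoding where
  one :=
    { loop := 1
      edge := fun _ _ => 1
      edge_swap := fun _ _ _ => rfl }

instance : Inv Recoding where
  inv g :=
    { loop := g.loop⁻¹
      edge := fun l m => (g.edge (g.loop⁻¹ l) (g.loop⁻¹ m))⁻¹
      edge_swap := fun l m p => by simp [Equiv.symm_apply_eq, edge_swap] }

@[simp]
theorem loop_one : (1 : Recoding).loop = 1 := rfl

@[simp]
theorem edge_one (l m : Bool) : (1 : Recoding).edge l m = 1 := rfl

@[simp]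
theorem loop_mul (g h : Recoding) : (g * h).loop = g.loop * h.loop := rfl

@[simp]
theorem edge_mul (g h : Recoding) (l m : Bool) :
    (g * h).edge l m = g.edge (h.loop l) (h.loop m) * h.edge l m := rfl

@[simp]
theorem loop_inv (g : Recoding) : g⁻¹.loop = g.loop⁻¹ := rfl

@[simp]
theorem edge_inv (g : Recoding) (l m : Bool) :
    g⁻¹.edge l m = (g.edge (g.loop⁻¹ l) (g.loop⁻¹ m))⁻¹ := rfl

instance : Group Recoding :=
  Group.ofLeftAxioms (fun _ _ _ => rfl) (fun _ => rfl) fun g => by ext <;> simp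

section recode

variable {V W : Type*} [DecidableEq V] [DecidableEq W] (g h : Recoding)

/-- The digraph obtained from `A` by rewriting loops and edges as `g` prescribes. -/
def recode (A : V → V → Bool) (u v : V) : Bool :=
  if u = v then g.loop (A u u) else (g.edge (A u u) (A v v) (edgeType A u v)).1

@[simp]
theorem recode_self (A : V → V → Bool) (u : V) : g.recode A u u = g.loop (A u u) :=
  if_pos rfl

theorem edgeType_recode (A : V → V → Bool) {u v : V} (huv : u ≠ v) :
    edgeType (g.recode A) u v = g.edge (A u u) (A v v) (edgeType A u v) := by
  rw [edgeType, recode, recode, if_neg huv, if_neg huv.symm, ← edgeType_swap, edge_swap]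
  rfl

@[simp]
theorem recode_one (A : V → V → Bool) : (1 : Recoding).recode A = A :=
  adj_ext (by simp) fun u v huv => by simp [edgeType_recode _ _ huv]

theorem recode_mul (A : V → V → Bool) : (g * h).recode A = g.recode (h.recode A) :=
  adj_ext (by simp) fun u v huv => by simp [edgeType_recode _ _ huv]

theorem recode_comp_of_injective {f : V → W} (hf : f.Injective) {A : W → W → Bool}
    {B : V → V → Bool} (hAB : ∀ u v, A (f u) (f v) = B u v) (u v : V) :
    g.recode A (f u) (f v) = g.recode B u v := by
  simp only [recode, edgeType, hf.eq_iff, hAB]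

end recode

instance : SMul Recoding D where
  smul g := Quotient.map (fun G => ⟨G.n, G.pos, g.recode G.adj⟩) fun _ _ ⟨e, he⟩ =>
    ⟨e, g.recode_comp_of_injective e.injective he⟩

theorem smul_ofAdj (g : Recoding) {n : ℕ} [NeZero n] (A : Fin n → Fin n → Bool) :
    g • D.ofAdj A = D.ofAdj (g.recode A) := rfl

theorem nVerts_smul (g : Recoding) (x : D) : nVerts (g • x) = nVerts x :=
  Quotient.inductionOn x fun _ => rfl

instance : MulAction Recoding D where
  one_smul x := Quotient.inductionOn x fun G =>
    congrArg (fun A => toD ⟨G.n, G.pos, A⟩) (recode_one G.adj)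
  mul_smul g h x := Quotient.inductionOn x fun G =>
    congrArg (fun A => toD ⟨G.n, G.pos, A⟩) (recode_mul g h G.adj)

instance : CovariantClass Recoding D (· • ·) (· ≤ ·) where
  elim g x y := by
    rintro ⟨G, H, rfl, rfl, f, hf⟩
    exact D.toD_le_toD_iff.2 ⟨f, g.recode_comp_of_injective f.injective hf⟩

theorem smul_le_smul_iff (g : Recoding) {x y : D} : g • x ≤ g • y ↔ x ≤ y := by
  refine ⟨fun h => ?_, fun h => smul_mono_right g h⟩
  simpa only [inv_smul_smul] using smul_mono_right g⁻¹ h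

theorem toPerm_mem_levelAut (g : Recoding) (N : ℕ) : MulAction.toPerm g ∈ D.levelAut N :=
  ⟨g.nVerts_smul, fun _ _ _ _ => g.smul_le_smul_iff⟩

instance (n : ℕ) : MulAction Recoding (Dn n) where
  smul g x := ⟨g • (x : D), (g.nVerts_smul x).trans_le x.2⟩
  one_smul x := Subtype.ext (one_smul _ (x : D))
  mul_smul g h x := Subtype.ext (mul_smul g h (x : D))

end Recoding

/-- The permutations of edge types that commute with reversal: these recode the edges between
vertices of equal loop status. -/
abbrev SymmEdgePerm : Type :=
  {d : Equiv.Perm (Bool × Bool) // ∀ p, d p.swap = (d p).swap}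

theorem card_symmEdgePerm : Nat.card SymmEdgePerm = 4 := by
  rw [Nat.card_eq_fintype_card]
  decide

/-- The identity or the reversal of edges, according to `b`. -/
def reverseIf (b : Bool) : SymmEdgePerm :=
  ⟨if b then sigmaSwap else 1, fun _ => by cases b <;> rfl⟩

theorem reverseIf_apply_true_false (b : Bool) : (reverseIf b).1 (true, false) = (!b, b) := by
  cases b <;> rfl

theorem reverseIf_apply_false_true (b : Bool) : (reverseIf b).1 (false, true) = (b, !b) := by
  cases b <;> rfl

theorem reverseIf_apply_eq_or (b : Bool) (p : Bool × Bool) :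
    (reverseIf b).1 p = p ∨ (reverseIf b).1 p = p.swap := by
  cases b
  · exact .inl rfl
  · exact .inr rfl

theorem exists_eq_reverseIf {π : Equiv.Perm (Bool × Bool)}
    (hπ : ∀ p, π p = p ∨ π p = p.swap) : ∃ b, π = (reverseIf b).1 := by
  decide +revert

theorem exists_symmEdgePerm_apply_diag (τ : Equiv.Perm Bool) :
    ∃ d : SymmEdgePerm, (∀ a, d.1 (a, a) = (τ a, τ a)) ∧ ∀ p, p.swap ≠ p → d.1 p = p := by
  decide +revert

namespace Recoding

/-- The recoding that applies `d l` between vertices of loop status `l`, and `π` to the pairs read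
from their looped to their loopless vertex. -/
def ofData (loop : Equiv.Perm Bool) (d : Bool → SymmEdgePerm) (π : Equiv.Perm (Bool × Bool)) :
    Recoding where
  loop := loop
  edge
    | true, false => π
    | false, true => sigmaSwap * π * sigmaSwap
    | false, false => d false
    | true, true => d true
  edge_swap
    | true, false => fun _ => rfl
    | false, true => fun _ => rfl
    | false, false => (d false).2
    | true, true => (d true).2

theorem edge_ofData_self (loop : Equiv.Perm Bool) (d : Bool → SymmEdgePerm)
    (π : Equiv.Perm (Bool × Bool)) (l : Bool) : (ofData loop d π).edge l l = d l := by
  cases l <;> rfl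

/-- The independent data that determine a recoding. -/
def equivData : Recoding ≃ Equiv.Perm Bool × (Bool → SymmEdgePerm) × Equiv.Perm (Bool × Bool) where
  toFun g := (g.loop, fun l => ⟨g.edge l l, g.edge_swap l l⟩, g.edge true false)
  invFun t := ofData t.1 t.2.1 t.2.2
  left_inv g := by
    have hswap : sigmaSwap * g.edge true false * sigmaSwap = g.edge false true :=
      Equiv.ext fun p => (g.edge_swap true false p.swap).symm
    ext l m : 3
    · rfl
    · cases l <;> cases m <;> first | rfl | exact hswap
  right_inv := by
    rintro ⟨loop, d, π⟩
    exact Prod.ext rfl (Prod.ext (funext fun l => Subtype.ext (edge_ofData_self loop d π l)) rfl)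

theorem nat_card : Nat.card Recoding = 768 := by
  have hloop : Nat.card (Equiv.Perm Bool) = 2 := by simp [Fintype.card_perm]
  have hedge : Nat.card (Equiv.Perm (Bool × Bool)) = 24 := by
    simp [Fintype.card_perm, Nat.factorial]
  rw [Nat.card_congr equivData, Nat.card_prod, Nat.card_prod, Nat.card_fun, hloop, hedge,
    card_symmEdgePerm, Nat.card_eq_fintype_card, Fintype.card_bool]
  norm_num

end Recoding

/-! ### Small digraphs and cones -/

namespace D

variable {n : ℕ} {l m : Bool} {p q s : Bool × Bool}

/-- The one-vertex class whose vertex has loop status `l`. -/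
def loopVertex (l : Bool) : D :=
  ofAdj fun _ _ : Fin 1 => l

theorem exists_loopVertex_eq {x : D} (hx : nVerts x = 1) : ∃ l, loopVertex l = x := by
  obtain ⟨A, rfl⟩ := exists_ofAdj_eq hx
  refine ⟨A 0 0, congrArg ofAdj ?_⟩
  ext u v
  rw [Subsingleton.elim u 0, Subsingleton.elim v 0]

theorem loopVertex_le_ofAdj_iff [NeZero n] {A : Fin n → Fin n → Bool} :
    loopVertex l ≤ ofAdj A ↔ ∃ u, A u u = l := by
  rw [loopVertex, ofAdj_le_ofAdj_iff]
  exact ⟨fun ⟨f, _, hf⟩ => ⟨f 0, hf 0 0⟩, fun ⟨u, hu⟩ =>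
    ⟨fun _ => u, Function.injective_of_subsingleton _, fun _ _ => hu⟩⟩

theorem loopVertex_injective : Function.Injective loopVertex := fun l m h => by
  obtain ⟨-, hlm⟩ := loopVertex_le_ofAdj_iff.1 h.le
  exact hlm.symm

/-- The adjacency matrix on two vertices of loop statuses `l` and `m` whose pair has type `p`. -/
def pairAdj (l m : Bool) (p : Bool × Bool) : Fin 2 → Fin 2 → Bool :=
  ![![l, p.1], ![p.2, m]]

@[simp]
theorem pairAdj_self (u : Fin 2) : pairAdj l l p u u = l := by
  fin_cases u <;> rfl

theorem pairAdj_edgeType (A : Fin 2 → Fin 2 → Bool) :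
    pairAdj (A 0 0) (A 1 1) (edgeType A 0 1) = A := by
  ext u v
  fin_cases u <;> fin_cases v <;> rfl

/-- The two-vertex class with adjacency matrix `pairAdj l m p`. -/
def pair (l m : Bool) (p : Bool × Bool) : D :=
  ofAdj (pairAdj l m p)

theorem exists_pair_eq {x : D} (hx : nVerts x = 2) : ∃ l m p, pair l m p = x := by
  obtain ⟨A, rfl⟩ := exists_ofAdj_eq hx
  exact ⟨_, _, _, congrArg ofAdj (pairAdj_edgeType A)⟩

theorem pair_le_ofAdj_iff [NeZero n] {A : Fin n → Fin n → Bool} :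
    pair l m p ≤ ofAdj A ↔ ∃ u v, u ≠ v ∧ A u u = l ∧ A v v = m ∧ edgeType A u v = p := by
  rw [pair, ofAdj_le_ofAdj_iff]
  constructor
  · rintro ⟨f, hinj, hf⟩
    exact ⟨f 0, f 1, hinj.ne zero_ne_one, hf 0 0, hf 1 1, Prod.ext (hf 0 1) (hf 1 0)⟩
  · rintro ⟨u, v, huv, rfl, rfl, rfl⟩
    exact ⟨![u, v], injective_pair_iff_ne.2 huv, fun i j => by
      fin_cases i <;> fin_cases j <;> rfl⟩

theorem pair_eq_pair_iff {l' m' : Bool} {p' : Bool × Bool} :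
    pair l m p = pair l' m' p' ↔
      l' = l ∧ m' = m ∧ p' = p ∨ m' = l ∧ l' = m ∧ p'.swap = p := by
  have hle : pair l m p = pair l' m' p' ↔ pair l m p ≤ pair l' m' p' :=
    ⟨le_of_eq, fun h => eq_of_le_of_nVerts_le h le_rfl⟩
  refine hle.trans (pair_le_ofAdj_iff.trans ?_)
  simp [Fin.exists_fin_two, pairAdj, edgeType, Prod.swap]

theorem pair_swap (l m : Bool) (p : Bool × Bool) : pair m l p.swap = pair l m p :=
  pair_eq_pair_iff.2 (.inr ⟨rfl, rfl, rfl⟩)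

/-- The adjacency matrix obtained from `A` by adding a vertex `0` of loop status `!l`, whose pair
with the vertex `j` of `A` has type `q j`. It is used for `A` whose vertices all have loop status
`l`, so that the new vertex can be recognised by its loop. -/
def coneAdj (l : Bool) (A : Fin n → Fin n → Bool) (q : Fin n → Bool × Bool) :
    Fin (n + 1) → Fin (n + 1) → Bool :=
  Fin.cons (Fin.cons (!l) fun j => (q j).1) fun i => Fin.cons (q i).2 (A i)

/-- The class with adjacency matrix `coneAdj l A q`. -/
def cone (l : Bool) (A : Fin n → Fin n → Bool) (q : Fin n → Bool × Bool) : D :=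
  ofAdj (coneAdj l A q)

section coneAdj

variable (A : Fin n → Fin n → Bool) (r : Fin n → Bool × Bool)

@[simp]
theorem coneAdj_zero_zero : coneAdj l A r 0 0 = !l := rfl

@[simp]
theorem coneAdj_succ_succ (i j : Fin n) : coneAdj l A r i.succ j.succ = A i j := rfl

@[simp]
theorem edgeType_coneAdj_zero_succ (j : Fin n) : edgeType (coneAdj l A r) 0 j.succ = r j := rfl

end coneAdj

theorem coneAdj_self_eq_iff {A : Fin n → Fin n → Bool} (hA : ∀ u, A u u = l)
    (r : Fin n → Bool × Bool) (u : Fin (n + 1)) : coneAdj l A r u u = !l ↔ u = 0 := by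
  cases u using Fin.cases <;> simp [hA]

theorem cone_le_ofAdj_of_embedding {N : ℕ} [NeZero N] {C : Fin N → Fin N → Bool} {w : Fin N}
    {f : Fin n → Fin N} (hf : f.Injective) (hfw : ∀ u, f u ≠ w) (hw : C w w = !l) :
    cone l (fun u v => C (f u) (f v)) (fun u => edgeType C w (f u)) ≤ ofAdj C := by
  refine ofAdj_le_ofAdj_iff.2 ⟨Fin.cons w f, Fin.cons_injective_iff.2 ⟨?_, hf⟩, fun u v => ?_⟩
  · rintro ⟨u, hu⟩
    exact hfw u hu
  · cases u using Fin.cases <;> cases v using Fin.cases <;> simp [coneAdj, edgeType, hw]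

theorem cone_le_cone_iff {k : ℕ} {A : Fin k → Fin k → Bool} {B : Fin n → Fin n → Bool}
    {q : Fin k → Bool × Bool} {r : Fin n → Bool × Bool} (hB : ∀ u, B u u = l) :
    cone l A q ≤ cone l B r ↔
      ∃ f : Fin k → Fin n, f.Injective ∧ (∀ u v, B (f u) (f v) = A u v) ∧ ∀ u, r (f u) = q u := by
  constructor
  · intro h
    obtain ⟨F, hinj, hF⟩ := ofAdj_le_ofAdj_iff.1 h
    have hF0 : F 0 = 0 := (coneAdj_self_eq_iff hB r _).1 (hF 0 0)
    have hsucc (u : Fin k) : ∃ v : Fin n, v.succ = F u.succ :=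
      Fin.exists_succ_eq.2 fun h0 => Fin.succ_ne_zero u (hinj (h0.trans hF0.symm))
    choose f hf using hsucc
    refine ⟨f, fun u v huv => Fin.succ_injective _ (hinj ?_), fun u v => ?_, fun u => ?_⟩
    · rw [← hf, ← hf, huv]
    · have hadj := hF u.succ v.succ
      rwa [← hf, ← hf] at hadj
    · have hedge : edgeType (coneAdj l B r) (F 0) (F u.succ) = q u :=
        Prod.ext (hF 0 u.succ) (hF u.succ 0)
      rwa [hF0, ← hf] at hedge
  · rintro ⟨f, hinj, hBA, hrq⟩
    have hle := cone_le_ofAdj_of_embedding (l := l) (C := coneAdj l B r) (w := 0)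
      ((Fin.succ_injective n).comp hinj) (fun u => Fin.succ_ne_zero _) rfl
    simp only [Function.comp_apply, coneAdj_succ_succ, edgeType_coneAdj_zero_succ, hBA, hrq] at hle
    exact hle

theorem cone_injective {A B : Fin n → Fin n → Bool} (hB : ∀ u, B u u = l)
    {r : Fin n → Bool × Bool} (hr : r.Injective) (h : cone l A r = cone l B r) : A = B := by
  obtain ⟨f, -, hBA, hf⟩ := (cone_le_cone_iff hB).1 h.le
  obtain rfl : f = id := funext fun u => hr (hf u)
  exact funext₂ fun u v => (hBA u v).symm

theorem exists_cone_eq [NeZero n] {A : Fin n → Fin n → Bool} (hA : ∀ u, A u u = l) {x : D}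
    (hx : nVerts x = n + 1) (hlx : loopVertex (!l) ≤ x) (hAx : ofAdj A ≤ x) :
    ∃ r, cone l A r = x := by
  obtain ⟨C, rfl⟩ := exists_ofAdj_eq hx
  obtain ⟨w, hw⟩ := loopVertex_le_ofAdj_iff.1 hlx
  obtain ⟨f, hinj, hf⟩ := ofAdj_le_ofAdj_iff.1 hAx
  have hfw (u : Fin n) : f u ≠ w := by
    rintro rfl
    simp [hf, hA] at hw
  have hle := cone_le_ofAdj_of_embedding hinj hfw hw
  simp only [hf] at hle
  exact ⟨_, eq_of_le_of_nVerts_le hle le_rfl⟩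

theorem pair_le_cone_iff {A : Fin n → Fin n → Bool} (hA : ∀ u, A u u = l)
    {r : Fin n → Bool × Bool} : pair (!l) l p ≤ cone l A r ↔ p ∈ Set.range r := by
  refine pair_le_ofAdj_iff.trans ?_
  simp [Fin.exists_fin_succ, coneAdj_self_eq_iff hA, hA, (Fin.succ_ne_zero _).symm]

/-- The cone over the pair of type `s` between two vertices of loop status `l`, with pairs of types
`p` and `q` from the apex to these two vertices. -/
def wedge (l : Bool) (p q s : Bool × Bool) : D :=
  cone l (pairAdj l l s) ![p, q]

@[simp]
theorem nVerts_wedge (l : Bool) (p q s : Bool × Bool) : nVerts (wedge l p q s) = 3 := rfl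

theorem cone_fin_two {A : Fin 2 → Fin 2 → Bool} (hA : ∀ u, A u u = l) (r : Fin 2 → Bool × Bool) :
    cone l A r = wedge l (r 0) (r 1) (edgeType A 0 1) := by
  have hpair : pairAdj l l (edgeType A 0 1) = A := by
    simpa only [hA] using pairAdj_edgeType A
  rw [wedge, hpair]
  exact congrArg (cone l A) (FinVec.etaExpand_eq r).symm

theorem wedge_le_cone_iff {A : Fin n → Fin n → Bool} (hA : ∀ u, A u u = l)
    {r : Fin n → Bool × Bool} :
    wedge l p q s ≤ cone l A r ↔ ∃ u v, u ≠ v ∧ r u = p ∧ r v = q ∧ edgeType A u v = s := by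
  refine (cone_le_cone_iff hA).trans ⟨?_, ?_⟩
  · rintro ⟨f, hinj, hf, hr⟩
    exact ⟨f 0, f 1, hinj.ne zero_ne_one, hr 0, hr 1, Prod.ext (hf 0 1) (hf 1 0)⟩
  · rintro ⟨u, v, huv, rfl, rfl, rfl⟩
    refine ⟨![u, v], injective_pair_iff_ne.2 huv, fun i j => ?_, fun i => ?_⟩
    · fin_cases i <;> fin_cases j <;> first | rfl | exact hA _
    · fin_cases i <;> rfl

theorem wedge_swap (l : Bool) (p q s : Bool × Bool) : wedge l q p s.swap = wedge l p q s :=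
  eq_of_le_of_nVerts_le
    ((wedge_le_cone_iff (pairAdj_self (l := l))).2 ⟨1, 0, one_ne_zero, rfl, rfl, rfl⟩) le_rfl

theorem wedge_injective (l : Bool) (hpq : p ≠ q) : Function.Injective (wedge l p q) :=
  fun _ _ h => congrArg (edgeType · 0 1)
    (cone_injective pairAdj_self (injective_pair_iff_ne.2 hpq) h)

theorem exists_wedge_eq_of_nVerts_eq_three {x : D} (hx : nVerts x = 3) :
    (∃ (l : Bool) (A : Fin 3 → Fin 3 → Bool), (∀ u, A u u = l) ∧ ofAdj A = x) ∨
      ∃ l p q s, wedge l p q s = x := by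
  obtain ⟨A, rfl⟩ := exists_ofAdj_eq hx
  have hloops : ∀ c : Fin 3 → Bool,
      (∃ l, ∀ u, c u = l) ∨ ∃ w l, c w = (!l) ∧ ∀ u, c (w.succAbove u) = l := by decide
  rcases hloops fun u => A u u with ⟨l, hl⟩ | ⟨w, l, hw, hl⟩
  · exact .inl ⟨l, A, hl, rfl⟩
  have hle := cone_le_ofAdj_of_embedding (Fin.succAbove_right_injective (p := w))
    (w.succAbove_ne ·) hw
  rw [cone_fin_two hl] at hle
  exact .inr ⟨l, _, _, _, eq_of_le_of_nVerts_le hle le_rfl⟩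

end D

namespace Recoding

open D

variable (g : Recoding)

theorem loop_not (l : Bool) : g.loop (!l) = !g.loop l :=
  Bool.eq_not_of_ne (g.loop.injective.ne (Bool.not_ne_self l))

theorem smul_loopVertex (l : Bool) : g • loopVertex l = loopVertex (g.loop l) := by
  rw [loopVertex, smul_ofAdj, loopVertex]
  congr 1
  ext u v
  rw [Subsingleton.elim v u, recode_self]

theorem smul_pair (l m : Bool) (p : Bool × Bool) :
    g • pair l m p = pair (g.loop l) (g.loop m) (g.edge l m p) := by
  rw [pair, smul_ofAdj, ← pairAdj_edgeType (g.recode _), edgeType_recode _ _ zero_ne_one,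
    recode_self, recode_self]
  rfl

theorem smul_cone {n : ℕ} {l : Bool} {A : Fin n → Fin n → Bool} (hA : ∀ u, A u u = l)
    (r : Fin n → Bool × Bool) :
    g • cone l A r = cone (g.loop l) (g.recode A) fun u => g.edge (!l) l (r u) := by
  have hA' (u v : Fin n) : g.recode (coneAdj l A r) u.succ v.succ = g.recode A u v :=
    g.recode_comp_of_injective (Fin.succ_injective n) (coneAdj_succ_succ A r) u v
  have hr (u : Fin n) : edgeType (g.recode (coneAdj l A r)) 0 u.succ = g.edge (!l) l (r u) := by
    rw [edgeType_recode _ _ (Fin.succ_ne_zero u).symm, coneAdj_zero_zero, coneAdj_succ_succ, hA,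
      edgeType_coneAdj_zero_succ]
  have hle := cone_le_ofAdj_of_embedding (l := g.loop l) (C := g.recode (coneAdj l A r)) (w := 0)
    (Fin.succ_injective n) Fin.succ_ne_zero (by rw [recode_self, coneAdj_zero_zero, loop_not])
  simp only [hA', hr] at hle
  exact (eq_of_le_of_nVerts_le hle le_rfl).symm

theorem smul_wedge (l : Bool) (p q s : Bool × Bool) :
    g • wedge l p q s = wedge (g.loop l) (g.edge (!l) l p) (g.edge (!l) l q) (g.edge l l s) := by
  rw [wedge, smul_cone _ pairAdj_self, cone_fin_two (by simp), edgeType_recode _ _ zero_ne_one]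
  rfl

theorem eq_one_of_smul_eq_self (hg : ∀ x ∈ Dn 3, g • x = x) : g = 1 := by
  have hloop (l : Bool) : g.loop l = l :=
    loopVertex_injective (by rw [← smul_loopVertex, hg _ (Nat.le_add_left 1 2)])
  have hmixed {l m : Bool} (hlm : l ≠ m) (p : Bool × Bool) : g.edge l m p = p := by
    have hpair := g.smul_pair l m p
    rw [hg _ (Nat.le_succ 2), hloop, hloop, pair_eq_pair_iff] at hpair
    rcases hpair with ⟨-, -, h⟩ | ⟨hml, -, -⟩
    · exact h
    · exact absurd hml.symm hlm
  have hself (l : Bool) (s : Bool × Bool) : g.edge l l s = s := by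
    have hwedge := g.smul_wedge l (true, true) (true, false) s
    rw [hg _ (nVerts_wedge ..).le, hloop, hmixed (Bool.not_ne_self l),
      hmixed (Bool.not_ne_self l)] at hwedge
    exact (wedge_injective l (by decide) hwedge).symm
  ext l m : 3
  · exact hloop l
  · rcases eq_or_ne l m with rfl | hlm
    · exact Equiv.ext (hself l)
    · exact Equiv.ext (hmixed hlm)

instance : FaithfulSMul Recoding (Dn 3) where
  eq_of_smul_eq_smul {g h} hgh := by
    refine (inv_mul_eq_one.1 (eq_one_of_smul_eq_self (h⁻¹ * g) fun x hx => ?_)).symm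
    have hx' : g • x = h • x := congrArg Subtype.val (hgh ⟨x, hx⟩)
    rw [mul_smul, hx', inv_smul_smul]

end Recoding

/-! ### Tournaments -/

namespace D

variable {n : ℕ} {l : Bool} {x y : D}

/-- All two-vertex subdigraphs of `x` lie in the class `y`. -/
def IsHomogeneous (y x : D) : Prop :=
  ∀ z ≤ x, nVerts z = 2 → z = y

theorem isHomogeneous_ofAdj_iff [NeZero n] {A : Fin n → Fin n → Bool} {p : Bool × Bool} :
    IsHomogeneous (pair l l p) (ofAdj A) ↔ ∀ u v, u ≠ v →
      A u u = l ∧ A v v = l ∧ (edgeType A u v = p ∨ edgeType A u v = p.swap) := by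
  constructor
  · intro h u v huv
    have hpair := h _ (pair_le_ofAdj_iff.2 ⟨u, v, huv, rfl, rfl, rfl⟩) rfl
    rw [pair_eq_pair_iff] at hpair
    grind
  · intro h z hz hz2
    obtain ⟨k, m, q, rfl⟩ := exists_pair_eq hz2
    obtain ⟨u, v, huv, rfl, rfl, rfl⟩ := pair_le_ofAdj_iff.1 hz
    obtain ⟨hu, hv, hedge⟩ := h u v huv
    rw [hu, hv]
    rcases hedge with hedge | hedge <;> rw [hedge]
    exact pair_swap l l p

theorem IsHomogeneous.eq_of_swap_eq {p : Bool × Bool} (hp : p.swap = p)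
    (hx : IsHomogeneous (pair l l p) x) (hy : IsHomogeneous (pair l l p) y)
    (hxy : nVerts x = nVerts y) (hx2 : 2 ≤ nVerts x) : x = y := by
  have : NeZero (nVerts x) := ⟨by lia⟩
  have : Nontrivial (Fin (nVerts x)) := Fin.nontrivial_iff_two_le.2 hx2
  obtain ⟨A, hA⟩ := exists_ofAdj_eq (x := x) rfl
  obtain ⟨B, hB⟩ := exists_ofAdj_eq hxy.symm
  rw [← hA, isHomogeneous_ofAdj_iff, hp] at hx
  rw [← hB, isHomogeneous_ofAdj_iff, hp] at hy
  rw [← hA, ← hB]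
  refine congrArg ofAdj (adj_ext (fun u => ?_) fun u v huv => ?_)
  · obtain ⟨v, hv⟩ := exists_ne u
    rw [(hx v u hv).2.1, (hy v u hv).2.1]
  · rw [or_self_iff.1 (hx u v huv).2.2, or_self_iff.1 (hy u v huv).2.2]

theorem IsHomogeneous.map {N : ℕ} {σ : Equiv.Perm D} (hσ : σ ∈ levelAut N) (hx : x ∈ Dn N)
    (h : IsHomogeneous y x) : IsHomogeneous (σ y) (σ x) := fun z hz hz2 => by
  obtain ⟨w, hw, rfl⟩ := levelAut.exists_le_of_le_apply hσ hx hz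
  rw [h w hw (by rwa [levelAut.nVerts_apply hσ] at hz2)]

/-- The class `x` consists of tournaments with loop status `l` at each vertex. -/
def IsTournament (l : Bool) (x : D) : Prop :=
  IsHomogeneous (pair l l (true, false)) x

theorem isTournament_ofAdj_iff [NeZero n] {A : Fin n → Fin n → Bool} :
    IsTournament l (ofAdj A) ↔ ∀ u v, u ≠ v → A u u = l ∧ A v u = !A u v := by
  rw [IsTournament, isHomogeneous_ofAdj_iff]
  constructor
  · intro h u v huv
    obtain ⟨hu, -, hedge⟩ := h u v huv
    simp only [edgeType, Prod.swap, Prod.mk.injEq] at hedge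
    exact ⟨hu, by grind⟩
  · intro h u v huv
    obtain ⟨hu, huv'⟩ := h u v huv
    refine ⟨hu, (h v u huv.symm).1, ?_⟩
    cases hA : A u v <;> simp [edgeType, hA, huv']

/-- The class of the transitive tournament on `n` vertices of loop status `l`. -/
def transitive (l : Bool) (n : ℕ) [NeZero n] : D :=
  ofAdj fun i j : Fin n => if i = j then l else decide (i < j)

/-- The class of the cyclically oriented triangle on vertices of loop status `l`. -/
def cyclic (l : Bool) : D :=
  ofAdj fun i j : Fin 3 => if i = j then l else decide (j = i + 1)

theorem isTournament_transitive (l : Bool) (n : ℕ) [NeZero n] :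
    IsTournament l (transitive l n) :=
  isTournament_ofAdj_iff.2 fun u v huv => by
    rcases huv.lt_or_gt with h | h <;> simp [h, h.ne, h.ne', h.not_gt]

theorem isTournament_cyclic (l : Bool) : IsTournament l (cyclic l) :=
  isTournament_ofAdj_iff.2 (by decide +revert)

theorem not_cyclic_le_transitive (l : Bool) (n : ℕ) [NeZero n] : ¬ cyclic l ≤ transitive l n := by
  intro h
  obtain ⟨f, hinj, hf⟩ := ofAdj_le_ofAdj_iff.1 h
  have hlt (i : Fin 3) : f i < f (i + 1) := by
    have hne : i ≠ i + 1 := by decide +revert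
    simpa [hinj.eq_iff, hne] using hf i (i + 1)
  exact lt_irrefl _ ((hlt 0).trans ((hlt 1).trans (hlt 2)))

theorem transitive_ne_cyclic (l : Bool) : transitive l 3 ≠ cyclic l := fun h =>
  not_cyclic_le_transitive l 3 h.ge

theorem transitive_three_le_of_path [NeZero n] {A : Fin n → Fin n → Bool}
    (hA : IsTournament l (ofAdj A)) {u v w : Fin n} (huv : u ≠ v) (huw : u ≠ w) (hvw : v ≠ w)
    (h : A u v = true ∧ A u w = true ∧ A v w = true) : transitive l 3 ≤ ofAdj A := by
  rw [isTournament_ofAdj_iff] at hA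
  obtain ⟨hu, hvu⟩ := hA u v huv
  obtain ⟨hv, hwv⟩ := hA v w hvw
  obtain ⟨hw, -⟩ := hA w u huw.symm
  obtain ⟨-, hwu⟩ := hA u w huw
  refine ofAdj_le_ofAdj_iff.2 ⟨![u, v, w], ?_, ?_⟩
  · simp [Function.Injective, Fin.forall_fin_succ, huv, huw, hvw, huv.symm, huw.symm, hvw.symm]
  · simp [Fin.forall_fin_succ, h, hu, hv, hw, hvu, hwv, hwu]

theorem transitive_three_le_of_adj_eq [NeZero n] {A : Fin n → Fin n → Bool}
    (hA : IsTournament l (ofAdj A)) {u v w : Fin n} (huv : u ≠ v) (huw : u ≠ w) (hvw : v ≠ w)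
    (h : A u v = A u w) : transitive l 3 ≤ ofAdj A := by
  have hanti := isTournament_ofAdj_iff.1 hA
  wlog hvw' : A v w = true generalizing v w
  · exact this huw huv hvw.symm h.symm (by grind)
  cases huv' : A u v
  · exact transitive_three_le_of_path hA hvw huv.symm huw.symm (by grind)
  · exact transitive_three_le_of_path hA huv huw hvw (by grind)

theorem adj_ne_adj_of_ofAdj_eq_cyclic {A : Fin 3 → Fin 3 → Bool} (hA : ofAdj A = cyclic l)
    {u v w : Fin 3} (huv : u ≠ v) (huw : u ≠ w) (hvw : v ≠ w) : A u v ≠ A u w := fun h => by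
  have htrans := transitive_three_le_of_adj_eq (hA ▸ isTournament_cyclic l) huv huw hvw h
  exact transitive_ne_cyclic l (eq_of_le_of_nVerts_le (htrans.trans_eq hA) le_rfl)

theorem transitive_three_le_of_three_lt (hx : IsTournament l x) (hn : 3 < nVerts x) :
    transitive l 3 ≤ x := by
  have : NeZero (nVerts x) := ⟨by lia⟩
  obtain ⟨A, hA⟩ := exists_ofAdj_eq (x := x) rfl
  have hcard : Fintype.card Bool < Fintype.card {u : Fin (nVerts x) // u ≠ 0} := by
    simp only [Fintype.card_bool, ne_eq, Fintype.card_subtype_compl, Fintype.card_fin,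
      Fintype.card_unique]
    lia
  obtain ⟨v, w, hvw, heq⟩ := Fintype.exists_ne_map_eq_of_card_lt (fun v => A 0 v.1) hcard
  rw [← hA] at hx ⊢
  exact transitive_three_le_of_adj_eq hx v.2.symm w.2.symm (Subtype.coe_injective.ne hvw) heq

theorem IsTournament.eq_transitive_or_eq_cyclic (hx : IsTournament l x) (hn : nVerts x = 3) :
    x = transitive l 3 ∨ x = cyclic l := by
  obtain ⟨A, rfl⟩ := exists_ofAdj_eq hn
  refine or_iff_not_imp_left.2 fun htrans => ?_
  have hne {u v w : Fin 3} (huv : u ≠ v) (huw : u ≠ w) (hvw : v ≠ w) : A u v ≠ A u w := fun heq =>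
    htrans (eq_of_le_of_nVerts_le (transitive_three_le_of_adj_eq hx huv huw hvw heq) le_rfl).symm
  have h0 : A 0 1 ≠ A 0 2 := hne (by decide) (by decide) (by decide)
  have h1 : A 1 0 ≠ A 1 2 := hne (by decide) (by decide) (by decide)
  have h2 : A 2 0 ≠ A 2 1 := hne (by decide) (by decide) (by decide)
  rw [isTournament_ofAdj_iff] at hx
  obtain ⟨hl0, h10⟩ := hx 0 1 (by decide)
  obtain ⟨hl1, h21⟩ := hx 1 2 (by decide)
  obtain ⟨hl2, h02⟩ := hx 2 0 (by decide)
  suffices hle : cyclic l ≤ ofAdj A from (eq_of_le_of_nVerts_le hle le_rfl).symm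
  rw [cyclic, ofAdj_le_ofAdj_iff]
  cases h : A 0 1
  · obtain ⟨h12, h20⟩ : A 1 2 = false ∧ A 2 0 = false := by grind
    refine ⟨![0, 2, 1], by decide, ?_⟩
    simp [Fin.forall_fin_succ, hl0, hl1, hl2, h, h10, h12, h21, h20, h02]
  · obtain ⟨h12, h20⟩ : A 1 2 = true ∧ A 2 0 = true := by grind
    refine ⟨id, Function.injective_id, ?_⟩
    simp [Fin.forall_fin_succ, hl0, hl1, hl2, h, h10, h12, h21, h20, h02]

end D

/-! ### Automorphisms on two vertices -/

namespace D

theorem loopVertex_le_pair_iff {k l m : Bool} {p : Bool × Bool} :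
    loopVertex k ≤ pair l m p ↔ k ∈ ({l, m} : Set Bool) := by
  refine loopVertex_le_ofAdj_iff.trans ?_
  simp [Fin.exists_fin_two, pairAdj, eq_comm]

theorem exists_loopVertex_eq_or_exists_pair_eq {x : D} (hx : x ∈ Dn 2) :
    (∃ l, loopVertex l = x) ∨ ∃ l m p, pair l m p = x := by
  rcases Nat.le_add_one_iff.1 hx with hx1 | hx2
  · exact .inl (exists_loopVertex_eq (le_antisymm hx1 (nVerts_pos x)))
  · exact .inr (exists_pair_eq hx2)

theorem pair_self_eq_arc {l : Bool} {p : Bool × Bool} (hp : p.swap ≠ p) :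
    pair l l p = pair l l (true, false) := by
  rw [pair_eq_pair_iff]
  decide +revert

namespace levelAut

variable {N : ℕ} {σ : Equiv.Perm D}

theorem exists_map_loopVertex (hσ : σ ∈ levelAut N) :
    ∃ τ : Equiv.Perm Bool, ∀ l, σ (loopVertex l) = loopVertex (τ l) := by
  choose τ hτ using fun l => exists_loopVertex_eq (nVerts_apply hσ (loopVertex l))
  have hinj : τ.Injective := fun l m hlm =>
    loopVertex_injective (σ.injective (by rw [← hτ, ← hτ, hlm]))
  exact ⟨.ofBijective τ (Finite.injective_iff_bijective.1 hinj), fun l => (hτ l).symm⟩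

section FixedLoopVertex

variable (hσ : σ ∈ levelAut N) (hN : 3 ≤ N) (hfix : ∀ l, σ (loopVertex l) = loopVertex l)
include hσ hN hfix

theorem exists_map_pair (l m : Bool) (p : Bool × Bool) :
    ∃ p', σ (pair l m p) = pair l m p' := by
  obtain ⟨l', m', p', hp'⟩ := exists_pair_eq (nVerts_apply hσ (pair l m p))
  have hloops : ({l', m'} : Set Bool) = {l, m} := by
    ext k
    rw [← loopVertex_le_pair_iff, ← loopVertex_le_pair_iff, hp',
      le_apply_iff_of_fixed hσ ((Nat.le_succ 2).trans hN) (hfix k)]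
  rcases Set.pair_eq_pair_iff.1 hloops with ⟨rfl, rfl⟩ | ⟨rfl, rfl⟩
  · exact ⟨p', hp'.symm⟩
  · exact ⟨p'.swap, by rw [pair_swap, hp']⟩

theorem map_arc (l : Bool) : σ (pair l l (true, false)) = pair l l (true, false) := by
  obtain ⟨p, hp⟩ := exists_map_pair hσ hN hfix l l (true, false)
  by_cases hswap : p.swap = p
  · have htrans := (isTournament_transitive l 3).map hσ hN
    have hcyc := (isTournament_cyclic l).map hσ hN
    rw [hp] at htrans hcyc
    have heq : σ (transitive l 3) = σ (cyclic l) := htrans.eq_of_swap_eq hswap hcyc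
      (by rw [nVerts_apply hσ, nVerts_apply hσ]; rfl) (by rw [nVerts_apply hσ]; exact Nat.le_succ 2)
    exact absurd (σ.injective heq) (transitive_ne_cyclic l)
  · rw [hp, pair_self_eq_arc hswap]

theorem exists_map_symm_pair (l : Bool) :
    ∃ τ : Equiv.Perm Bool, ∀ a, σ (pair l l (a, a)) = pair l l (τ a, τ a) := by
  have hsymm (a : Bool) : ∃ b, σ (pair l l (a, a)) = pair l l (b, b) := by
    obtain ⟨p, hp⟩ := exists_map_pair hσ hN hfix l l (a, a)
    by_cases hswap : p.swap = p
    · have hp' : p = (p.1, p.1) := Prod.ext rfl (congrArg Prod.fst hswap)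
      exact ⟨p.1, by rw [hp, ← hp']⟩
    · rw [pair_self_eq_arc hswap, ← map_arc hσ hN hfix, σ.injective.eq_iff, pair_eq_pair_iff] at hp
      simp at hp
  choose τ hτ using hsymm
  have hinj : τ.Injective := fun a b hab => by
    have hpair : pair l l (a, a) = pair l l (b, b) := σ.injective (by rw [hτ, hτ, hab])
    simpa [pair_eq_pair_iff, eq_comm] using hpair
  exact ⟨.ofBijective τ (Finite.injective_iff_bijective.1 hinj), hτ⟩

theorem exists_map_pair_self (l : Bool) :
    ∃ d : SymmEdgePerm, ∀ p, σ (pair l l p) = pair l l (d.1 p) := by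
  obtain ⟨τ, hτ⟩ := exists_map_symm_pair hσ hN hfix l
  obtain ⟨d, hdiag, harc⟩ := exists_symmEdgePerm_apply_diag τ
  refine ⟨d, fun p => ?_⟩
  by_cases hp : p.swap = p
  · obtain ⟨a, rfl⟩ : ∃ a, p = (a, a) := ⟨p.1, Prod.ext rfl (congrArg Prod.fst hp)⟩
    rw [hτ, hdiag]
  · rw [harc p hp, pair_self_eq_arc hp, map_arc hσ hN hfix]

theorem exists_map_pair_mixed :
    ∃ π : Equiv.Perm (Bool × Bool), ∀ p, σ (pair true false p) = pair true false (π p) := by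
  choose π hπ using exists_map_pair hσ hN hfix true false
  have hinj : π.Injective := fun p q hpq => by
    have hpair : pair true false p = pair true false q := σ.injective (by rw [hπ, hπ, hpq])
    simpa [pair_eq_pair_iff, eq_comm] using hpair
  exact ⟨.ofBijective π (Finite.injective_iff_bijective.1 hinj), hπ⟩

theorem exists_smul_eq_on_Dn_two_of_fixed :
    ∃ g : Recoding, ∀ x ∈ Dn 2, σ x = g • x := by
  choose d hd using exists_map_pair_self hσ hN hfix
  obtain ⟨π, hπ⟩ := exists_map_pair_mixed hσ hN hfix
  refine ⟨.ofData 1 d π, fun x hx => ?_⟩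
  obtain ⟨l, rfl⟩ | ⟨l, m, p, rfl⟩ := exists_loopVertex_eq_or_exists_pair_eq hx
  · rw [hfix, Recoding.smul_loopVertex]
    rfl
  · rw [Recoding.smul_pair]
    cases l <;> cases m
    · exact hd false p
    · rw [← pair_swap, hπ, ← pair_swap]
      rfl
    · exact hπ p
    · exact hd true p

end FixedLoopVertex

theorem exists_smul_eq_on_Dn_two (hσ : σ ∈ levelAut N) (hN : 3 ≤ N) :
    ∃ g : Recoding, ∀ x ∈ Dn 2, σ x = g • x := by
  obtain ⟨τ, hτ⟩ := exists_map_loopVertex hσ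
  let g₀ := Recoding.ofData τ (fun _ => ⟨1, fun _ => rfl⟩) 1
  obtain ⟨g, hg⟩ := exists_smul_eq_on_Dn_two_of_fixed
    (mul_mem (g₀⁻¹.toPerm_mem_levelAut N) hσ) hN fun l => by
      rw [Equiv.Perm.mul_apply, hτ, MulAction.toPerm_apply, inv_smul_eq_iff,
        Recoding.smul_loopVertex]
      rfl
  exact ⟨g₀ * g, fun x hx => by rw [mul_smul, ← hg x hx]; exact (smul_inv_smul g₀ (σ x)).symm⟩

end levelAut

end D

/-! ### Automorphisms on three vertices -/

theorem injective_of_range_subset {ι α : Type*} [Finite ι] {q r : ι → α} (hq : q.Injective)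
    (h : Set.range q ⊆ Set.range r) : r.Injective := by
  choose f hf using fun i => h (Set.mem_range_self i)
  obtain rfl : r ∘ f = q := funext hf
  exact hq.of_comp_right (Finite.surjective_of_injective hq.of_comp)

namespace D

variable {n : ℕ} {l : Bool}

theorem loopVertex_mem_Dn_two (l : Bool) : loopVertex l ∈ Dn 2 :=
  Nat.le_succ 1

theorem pair_mem_Dn_two (l m : Bool) (p : Bool × Bool) : pair l m p ∈ Dn 2 :=
  le_refl 2

theorem ofAdj_le_cone [NeZero n] (l : Bool) (A : Fin n → Fin n → Bool) (r : Fin n → Bool × Bool) :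
    ofAdj A ≤ cone l A r :=
  ofAdj_le_ofAdj_iff.2 ⟨Fin.succ, Fin.succ_injective n, coneAdj_succ_succ A r⟩

theorem loopVertex_le_cone (l : Bool) (A : Fin n → Fin n → Bool) (r : Fin n → Bool × Bool) :
    loopVertex (!l) ≤ cone l A r :=
  loopVertex_le_ofAdj_iff.2 ⟨0, coneAdj_zero_zero A r⟩

theorem wedge_self_reverseIf (l b : Bool) (p s : Bool × Bool) :
    wedge l p p ((reverseIf b).1 s) = wedge l p p s := by
  rcases reverseIf_apply_eq_or b s with h | h <;> rw [h]
  exact wedge_swap l p p s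

namespace levelAut

variable {N : ℕ} {σ : Equiv.Perm D}

theorem exists_edgeType_eq_of_map_cone (hσ : σ ∈ levelAut N) (hn : n + 1 ≤ N)
    {A C : Fin n → Fin n → Bool} (hA : ∀ u, A u u = l) (hC : ∀ u, C u u = l)
    {q r : Fin n → Bool × Bool} (hcone : σ (cone l A q) = cone l C r) {u v : Fin n} (huv : u ≠ v)
    {s : Bool × Bool} (hs : σ (wedge l (q u) (q v) (edgeType A u v)) = wedge l (q u) (q v) s) :
    ∃ u' v', u' ≠ v' ∧ r u' = q u ∧ r v' = q v ∧ edgeType C u' v' = s := by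
  rw [← wedge_le_cone_iff hC, ← hcone, ← hs, apply_le_apply_iff hσ hn, wedge_le_cone_iff hA]
  exact ⟨u, v, huv, rfl, rfl, rfl⟩

section FixedPairs

variable (hσ : σ ∈ levelAut N) (hfix : ∀ x ∈ Dn 2, σ x = x)
include hσ hfix

theorem exists_map_ofAdj [NeZero n] (hn : n ≤ N) {A : Fin n → Fin n → Bool}
    (hA : ∀ u, A u u = l) :
    ∃ B : Fin n → Fin n → Bool, (∀ u, B u u = l) ∧ σ (ofAdj A) = ofAdj B := by
  obtain ⟨B, hB⟩ := exists_ofAdj_eq (n := n) (nVerts_apply hσ (ofAdj A))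
  refine ⟨B, fun u => ?_, hB.symm⟩
  have hle : loopVertex (B u u) ≤ ofAdj A := by
    rw [← le_apply_iff_of_fixed hσ hn (hfix _ (loopVertex_mem_Dn_two _)), ← hB]
    exact loopVertex_le_ofAdj_iff.2 ⟨u, rfl⟩
  obtain ⟨v, hv⟩ := loopVertex_le_ofAdj_iff.1 hle
  exact hv.symm.trans (hA v)

theorem exists_map_cone [NeZero n] (hn : n + 1 ≤ N) {A B : Fin n → Fin n → Bool}
    (hA : ∀ u, A u u = l) (hB : ∀ u, B u u = l) (hAB : σ (ofAdj A) = ofAdj B)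
    (q : Fin n → Bool × Bool) :
    ∃ r, Set.range r = Set.range q ∧ σ (cone l A q) = cone l B r := by
  obtain ⟨r, hr⟩ := exists_cone_eq hB (nVerts_apply hσ (cone l A q))
    ((le_apply_iff_of_fixed hσ hn (hfix _ (loopVertex_mem_Dn_two _))).2
      (loopVertex_le_cone l A q))
    (hAB ▸ (apply_le_apply_iff hσ hn).2 (ofAdj_le_cone l A q))
  refine ⟨r, Set.ext fun p => ?_, hr.symm⟩
  rw [← pair_le_cone_iff hB, ← pair_le_cone_iff hA, hr,
    le_apply_iff_of_fixed hσ hn (hfix _ (pair_mem_Dn_two ..))]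

theorem map_wedge_eq_or (hN : 3 ≤ N) (l : Bool) (p q s : Bool × Bool) :
    σ (wedge l p q s) = wedge l p q s ∨ σ (wedge l p q s) = wedge l p q s.swap := by
  obtain ⟨r, hr, heq⟩ :=
    exists_map_cone hσ hfix hN pairAdj_self pairAdj_self (hfix _ (pair_mem_Dn_two l l s)) ![p, q]
  have hσ' : σ (wedge l p q s) = wedge l (r 0) (r 1) s :=
    heq.trans (cone_fin_two pairAdj_self r)
  have hpq : ({r 0, r 1} : Set (Bool × Bool)) = {p, q} := by
    ext x
    simpa [Fin.exists_fin_two, eq_comm, or_comm] using Set.ext_iff.1 hr x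
  rcases Set.pair_eq_pair_iff.1 hpq with ⟨h0, h1⟩ | ⟨h0, h1⟩ <;> rw [h0, h1] at hσ'
  · exact .inl hσ'
  · exact .inr (hσ'.trans (wedge_swap l q p s).symm)

theorem exists_map_wedge_eq_reverseIf (hN : 3 ≤ N) (l : Bool) (p q : Bool × Bool) :
    ∃ b, ∀ s, σ (wedge l p q s) = wedge l p q ((reverseIf b).1 s) := by
  rcases eq_or_ne p q with rfl | hpq
  · refine ⟨false, fun s => ?_⟩
    rw [wedge_self_reverseIf]
    exact (map_wedge_eq_or hσ hfix hN l p p s).elim id fun h => h.trans (wedge_swap l p p s)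
  have hmap (s : Bool × Bool) : ∃ s', (s' = s ∨ s' = s.swap) ∧
      σ (wedge l p q s) = wedge l p q s' :=
    (map_wedge_eq_or hσ hfix hN l p q s).elim (⟨_, .inl rfl, ·⟩) (⟨_, .inr rfl, ·⟩)
  choose f hf hσf using hmap
  have hinj : f.Injective := fun s t hst =>
    wedge_injective l hpq (σ.injective (by rw [hσf, hσf, hst]))
  obtain ⟨b, hb⟩ := exists_eq_reverseIf
    (π := .ofBijective f (Finite.injective_iff_bijective.1 hinj)) hf
  exact ⟨b, fun s => by rw [hσf, ← hb]; rfl⟩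

theorem map_ofAdj_of_map_wedge [NeZero n] (hn : n + 1 ≤ N) {A B : Fin n → Fin n → Bool}
    (hA : ∀ u, A u u = l) (hB : ∀ u, B u u = l) {q : Fin n → Bool × Bool} (hq : q.Injective)
    (h : ∀ u v, u ≠ v → σ (wedge l (q u) (q v) (edgeType A u v)) =
      wedge l (q u) (q v) (edgeType B u v)) :
    σ (ofAdj A) = ofAdj B := by
  obtain ⟨C, hC, hAC⟩ := exists_map_ofAdj hσ hfix (Nat.le_of_succ_le hn) hA
  obtain ⟨r, hr, hcone⟩ := exists_map_cone hσ hfix hn hA hC hAC q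
  have hr_inj := injective_of_range_subset hq hr.ge
  choose f hf using fun u => hr.ge (Set.mem_range_self (f := q) u)
  obtain rfl : r ∘ f = q := funext hf
  have hadj : (fun u v => C (f u) (f v)) = B := by
    refine adj_ext (fun u => (hC _).trans (hB u).symm) fun u v huv => ?_
    obtain ⟨u', v', -, hu, hv, huv'⟩ :=
      exists_edgeType_eq_of_map_cone hσ hn hA hC hcone huv (h u v huv)
    rw [← huv', hr_inj hu, hr_inj hv]
    rfl
  have hle : ofAdj B ≤ ofAdj C :=
    ofAdj_le_ofAdj_iff.2 ⟨f, hq.of_comp, fun u v => congrFun₂ hadj u v⟩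
  rw [hAC, eq_of_le_of_nVerts_le hle le_rfl]

theorem map_isTournament {x : D} (hx : x ∈ Dn N) (h : IsTournament l x) :
    IsTournament l (σ x) := by
  have hmap := h.map hσ hx
  rwa [hfix _ (pair_mem_Dn_two ..)] at hmap

theorem map_transitive_three (hN : 4 ≤ N) (l : Bool) : σ (transitive l 3) = transitive l 3 := by
  have htour := isTournament_transitive l 4
  obtain ⟨z, hz, hσz⟩ := exists_le_of_le_apply hσ hN (transitive_three_le_of_three_lt
    (map_isTournament hσ hfix hN htour) (nVerts_apply hσ (transitive l 4)).ge)
  have hz3 : nVerts z = 3 := by rw [← nVerts_apply hσ, hσz]; rfl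
  have hztour : IsTournament l z := fun w hw => htour w (hw.trans hz)
  rcases hztour.eq_transitive_or_eq_cyclic hz3 with rfl | rfl
  · exact hσz
  · exact absurd hz (not_cyclic_le_transitive l 4)

theorem map_cyclic (hN : 4 ≤ N) (l : Bool) : σ (cyclic l) = cyclic l := by
  have htour :=
    map_isTournament hσ hfix (x := cyclic l) (Nat.le_of_succ_le hN) (isTournament_cyclic l)
  refine (htour.eq_transitive_or_eq_cyclic (nVerts_apply hσ _)).resolve_left fun h => ?_
  rw [← map_transitive_three hσ hfix hN] at h
  exact transitive_ne_cyclic l (σ.injective h).symm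

end FixedPairs

end levelAut

end D

/-- The recoding that reverses the edges between vertices of loop status `l` if `b l`, and changes
nothing else. -/
def Recoding.reversal (b : Bool → Bool) : Recoding :=
  .ofData 1 (fun l => reverseIf (b l)) 1

namespace Recoding

open D

variable (b : Bool → Bool)

theorem loop_reversal (l : Bool) : (reversal b).loop l = l := rfl

theorem edge_reversal_self (l : Bool) (s : Bool × Bool) :
    (reversal b).edge l l s = (reverseIf (b l)).1 s :=
  congrArg (· s) (edge_ofData_self _ _ _ l)

theorem edge_reversal_of_ne {l m : Bool} (hlm : l ≠ m) (p : Bool × Bool) :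
    (reversal b).edge l m p = p := by
  cases l <;> cases m <;> first | rfl | exact absurd rfl hlm

theorem reversal_smul_of_mem_Dn_two {x : D} (hx : x ∈ Dn 2) : reversal b • x = x := by
  obtain ⟨l, rfl⟩ | ⟨l, m, p, rfl⟩ := exists_loopVertex_eq_or_exists_pair_eq hx
  · exact smul_loopVertex _ l
  rw [smul_pair, loop_reversal, loop_reversal]
  rcases eq_or_ne l m with rfl | hlm
  · rw [edge_reversal_self]
    rcases reverseIf_apply_eq_or (b l) p with h | h <;> rw [h]
    exact pair_swap l l p
  · rw [edge_reversal_of_ne b hlm]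

end Recoding

namespace D.levelAut

variable {N : ℕ} {σ : Equiv.Perm D} {l : Bool}

section Reversal

variable {e : Bool × Bool → Bool × Bool → Bool}
  (he : ∀ p q s, σ (wedge l p q s) = wedge l p q ((reverseIf (e p q)).1 s))
include he

theorem reversal_comm {p q : Bool × Bool} (hpq : p ≠ q) : e p q = e q p := by
  have hwedge : wedge l p q ((reverseIf (e p q)).1 (true, false)) =
      wedge l p q ((reverseIf (e q p)).1 (true, false)) := by
    rw [← he, ← wedge_swap, he, (reverseIf _).2, wedge_swap]
  simpa only [reverseIf_apply_true_false, Prod.mk.injEq, Bool.not_inj_iff, and_self] using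
    wedge_injective l hpq hwedge

theorem reversal_eq_of_ne (hσ : σ ∈ levelAut N) (hfix : ∀ x ∈ Dn 2, σ x = x) (hN : 4 ≤ N)
    {p q r : Bool × Bool} (hpq : p ≠ q) (hpr : p ≠ r) : e p q = e p r := by
  rcases eq_or_ne q r with rfl | hqr
  · rfl
  -- Let `u` be the vertex whose pair with the apex still has type `p` in the image of the cone over
  -- the cyclic triangle. Its arcs to the two other vertices are reversed according to `e p q` and
  -- `e p r`. Since the base of the image is again cyclic, exactly one of these arcs leaves `u`.
  obtain ⟨A, hA, hloop, h01, h02⟩ : ∃ A : Fin 3 → Fin 3 → Bool, ofAdj A = cyclic l ∧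
      (∀ u, A u u = l) ∧ edgeType A 0 1 = (true, false) ∧ edgeType A 0 2 = (false, true) :=
    ⟨_, rfl, fun _ => if_pos rfl, rfl, rfl⟩
  have hinj : Function.Injective ![p, q, r] := by
    simp [Function.Injective, Fin.forall_fin_succ, hpq, hpr, hqr, hpq.symm, hpr.symm, hqr.symm]
  obtain ⟨y, hy, hcone⟩ := exists_map_cone hσ hfix hN hloop hloop
    (by rw [hA, map_cyclic hσ hfix hN]) ![p, q, r]
  obtain ⟨u, v, huv, hu, hv, huv'⟩ :=
    exists_edgeType_eq_of_map_cone hσ hN hloop hloop hcone (u := 0) (v := 1) (by decide) (he ..)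
  obtain ⟨u₁, w, huw, hu₁, hw, huw'⟩ :=
    exists_edgeType_eq_of_map_cone hσ hN hloop hloop hcone (u := 0) (v := 2) (by decide) (he ..)
  obtain rfl : u = u₁ := injective_of_range_subset hinj hy.ge (hu.trans hu₁.symm)
  have hvw : v ≠ w := fun h => hqr (hv.symm.trans ((congrArg y h).trans hw))
  have hne := adj_ne_adj_of_ofAdj_eq_cyclic hA huv huw hvw
  have hAv : A u v = !e p q := by
    rw [h01, reverseIf_apply_true_false] at huv'
    exact congrArg Prod.fst huv'
  have hAw : A u w = e p r := by
    rw [h02, reverseIf_apply_false_true] at huw'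
    exact congrArg Prod.fst huw'
  simpa only [hAv, hAw, ne_eq, Bool.not_eq, not_not] using hne

theorem exists_forall_reversal_eq (hσ : σ ∈ levelAut N) (hfix : ∀ x ∈ Dn 2, σ x = x) (hN : 4 ≤ N) :
    ∃ b, ∀ p q, p ≠ q → e p q = b := by
  have hrow {p q r : Bool × Bool} : p ≠ q → p ≠ r → e p q = e p r :=
    reversal_eq_of_ne he hσ hfix hN
  have hcol {p q r : Bool × Bool} (hpr : p ≠ r) (hqr : q ≠ r) : e p r = e q r := by
    rw [reversal_comm he hpr, hrow hpr.symm hqr.symm, reversal_comm he hqr.symm]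
  refine ⟨e (true, true) (false, false), fun p q hpq => ?_⟩
  rcases eq_or_ne p (false, false) with rfl | hp
  · rw [hrow hpq (r := (true, true)) (by decide), reversal_comm he (by decide)]
  · rw [hrow hpq hp, hcol hp (q := (true, true)) (by decide)]

end Reversal

section FixedPairs

variable (hσ : σ ∈ levelAut N) (hfix : ∀ x ∈ Dn 2, σ x = x) (hN : 4 ≤ N)
include hσ hfix hN

theorem exists_forall_map_wedge_eq_reverseIf (l : Bool) :
    ∃ b, ∀ p q s, σ (wedge l p q s) = wedge l p q ((reverseIf b).1 s) := by
  choose e he using exists_map_wedge_eq_reverseIf hσ hfix (Nat.le_of_succ_le hN) l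
  obtain ⟨b, hb⟩ := exists_forall_reversal_eq he hσ hfix hN
  refine ⟨b, fun p q s => ?_⟩
  rcases eq_or_ne p q with rfl | hpq
  · rw [he, wedge_self_reverseIf, wedge_self_reverseIf]
  · rw [he, hb p q hpq]

theorem exists_smul_eq_on_Dn_three_of_fixed :
    ∃ g : Recoding, ∀ x ∈ Dn 3, σ x = g • x := by
  choose b hb using exists_forall_map_wedge_eq_reverseIf hσ hfix hN
  refine ⟨.reversal b, fun x hx => ?_⟩
  rcases Nat.le_add_one_iff.1 hx with hx2 | hx3
  · rw [hfix x hx2, Recoding.reversal_smul_of_mem_Dn_two b hx2]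
  obtain ⟨l, A, hA, rfl⟩ | ⟨l, p, q, s, rfl⟩ := exists_wedge_eq_of_nVerts_eq_three hx3
  · have hq : Function.Injective ![(true, true), (true, false), (false, true)] := by decide
    rw [Recoding.smul_ofAdj]
    refine map_ofAdj_of_map_wedge hσ hfix hN hA (fun u => ?_) hq fun u v huv => ?_
    · rw [Recoding.recode_self, Recoding.loop_reversal, hA]
    · rw [hb, Recoding.edgeType_recode _ _ huv, hA, hA, Recoding.edge_reversal_self]
  · rw [hb, Recoding.smul_wedge, Recoding.loop_reversal, Recoding.edge_reversal_self,
      Recoding.edge_reversal_of_ne b (Bool.not_ne_self l),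
      Recoding.edge_reversal_of_ne b (Bool.not_ne_self l)]

end FixedPairs

theorem exists_smul_eq_on_Dn_three (hσ : σ ∈ levelAut N) (hN : 4 ≤ N) :
    ∃ g : Recoding, ∀ x ∈ Dn 3, σ x = g • x := by
  obtain ⟨g₀, hg₀⟩ := exists_smul_eq_on_Dn_two hσ (Nat.le_of_succ_le hN)
  obtain ⟨g, hg⟩ := exists_smul_eq_on_Dn_three_of_fixed
    (mul_mem (g₀⁻¹.toPerm_mem_levelAut N) hσ)
    (fun x hx => (congrArg (g₀⁻¹ • ·) (hg₀ x hx)).trans (inv_smul_smul g₀ x)) hN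
  exact ⟨g₀ * g, fun x hx => by rw [mul_smul, ← hg x hx]; exact (smul_inv_smul g₀ (σ x)).symm⟩

end D.levelAut

namespace D

/-- `Aut_m(D_N)`: the restrictions to `Dn m` of the order automorphisms of `Dn N`. -/
def autRestrict {m N : ℕ} (h : m ≤ N) : Set (Dn m → Dn m) :=
  {f | ∃ ψ : Dn N → Dn N, IsOrderAuto ψ ∧ ∀ x : Dn m, (f x : D) = ψ ⟨x, x.2.trans h⟩}

theorem ofBijective_mem_levelAut {φ : D → D} (hφ : IsOrderAuto φ) (N : ℕ) :
    Equiv.ofBijective φ hφ.1 ∈ levelAut N :=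
  ⟨fun x => nVerts_map_eq isLowerSet_univ (fun _ => Iff.rfl)
    (fun _ _ _ _ => (hφ.2 _ _).symm) (Set.mem_univ x), fun _ _ _ _ => (hφ.2 _ _).symm⟩

theorem exists_mem_levelAut_extending {N : ℕ} {ψ : Dn N → Dn N} (hψ : IsOrderAuto ψ) :
    ∃ σ ∈ levelAut N, ∀ x : Dn N, σ x = ψ x := by
  classical
  let σ : Equiv.Perm D := Equiv.Perm.ofSubtype (p := (· ∈ Dn N)) (.ofBijective ψ hψ.1)
  have hσ (x : Dn N) : σ x = ψ x := Equiv.Perm.ofSubtype_apply_coe _ x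
  have hle : ∀ x ∈ Dn N, ∀ y ∈ Dn N, σ x ≤ σ y ↔ x ≤ y := fun x hx y hy => by
    rw [hσ ⟨x, hx⟩, hσ ⟨y, hy⟩]
    exact (hψ.2 _ _).symm
  refine ⟨σ, ⟨fun x => ?_, hle⟩, hσ⟩
  by_cases hx : x ∈ Dn N
  · exact nVerts_map_eq (isLowerSet_Dn N) (Equiv.Perm.ofSubtype_apply_mem_iff_mem _) hle hx
  · rw [show σ x = x from Equiv.Perm.ofSubtype_apply_of_not_mem _ hx]

theorem isOrderAuto_smul (g : Recoding) : IsOrderAuto (g • · : D → D) :=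
  ⟨MulAction.bijective g, fun _ _ => g.smul_le_smul_iff.symm⟩

theorem isOrderAuto_smul_Dn (g : Recoding) (N : ℕ) : IsOrderAuto (g • · : Dn N → Dn N) :=
  ⟨MulAction.bijective g, fun _ _ => g.smul_le_smul_iff.symm⟩

theorem aut3D_eq_range_smul : Aut3D = Set.range fun (g : Recoding) (x : Dn 3) => g • x := by
  ext f
  constructor
  · rintro ⟨φ, hφ, hf⟩
    obtain ⟨g, hg⟩ := levelAut.exists_smul_eq_on_Dn_three (ofBijective_mem_levelAut hφ 4) le_rfl
    exact ⟨g, funext fun x => Subtype.ext ((hf x).trans (hg x x.2)).symm⟩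
  · rintro ⟨g, rfl⟩
    exact ⟨_, isOrderAuto_smul g, fun _ => rfl⟩

theorem autRestrict_eq_range_smul {N : ℕ} (hN : 4 ≤ N) :
    autRestrict (Nat.le_of_succ_le hN) = Set.range fun (g : Recoding) (x : Dn 3) => g • x := by
  ext f
  constructor
  · rintro ⟨ψ, hψ, hf⟩
    obtain ⟨σ, hσ, hσψ⟩ := exists_mem_levelAut_extending hψ
    obtain ⟨g, hg⟩ := levelAut.exists_smul_eq_on_Dn_three hσ hN
    exact ⟨g, funext fun x => Subtype.ext
      ((hf x).trans ((hσψ _).symm.trans (hg x x.2))).symm⟩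
  · rintro ⟨g, rfl⟩
    exact ⟨_, isOrderAuto_smul_Dn g N, fun _ => rfl⟩

end D

theorem aut3D_eq_aut3D4_card_768_general {N : ℕ} (hN : 4 ≤ N) :
    Aut3D = D.autRestrict (Nat.le_of_succ_le hN) ∧
      Nat.card ↥(D.autRestrict (Nat.le_of_succ_le hN)) = 768 := by
  rw [D.autRestrict_eq_range_smul hN, Nat.card_range_of_injective smul_left_injective',
    Recoding.nat_card]
  exact ⟨D.aut3D_eq_range_smul, rfl⟩

/-- `Aut₃(D) = Aut₃(D₄)`, and this group has exactly 768 elements. -/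
theorem aut3D_eq_aut3D4_card_768 : Aut3D = Aut3D4 ∧ Nat.card ↥Aut3D4 = 768 :=
  aut3D_eq_aut3D4_card_768_general le_rfl
end

section
/- The group Aut₃(D₄) = {φ|₃ : φ an order automorphism of D₄} is isomorphic to the semidirect product ((ZMod 2)⁴ × Perm(Bool × Bool)) ⋊_α (ZMod 2), where α(1) sends (p,q,r,s,π) to (q,p,s,r, σ∘π∘σ) with σ the permutation of Bool × Bool given by σ(a,b) = (b,a). Moreover, there are at most four elements of Aut₃(D₄) that fix every digraph with at most 2 vertices. -/
/-!
A digraph with exactly one loop is the cone over a loopless digraph whose vertices carry colours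
in `Bool × Bool`, the colour of a vertex being the pair of edges between it and the apex. There
are four colours, so a loopless digraph on three vertices has a colouring with distinct colours
and can be read off from its cone and the cones over its two-vertex subdigraphs. These last cones
are determined by the cones over the hook, a three-vertex digraph in which every loopless
two-vertex digraph occurs exactly once. Among three vertices at most one has a loop or at most one
has none, and loop complementation exchanges the two cases. An automorphism of `D₄` that fixes `D₂`
and the two hooks therefore fixes `D₃`, and up to loop complementation the images of `D₂` and of
the hooks are given by the parameters `(p, q, r, s, π)`.
-/

namespace FinDigraph

section Embedding

variable {G H K : FinDigraph}

theorem Emb.trans (hGH : Emb G H) (hHK : Emb H K) : Emb G K := by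
  obtain ⟨f, hf⟩ := hGH
  obtain ⟨g, hg⟩ := hHK
  exact ⟨f.trans g, fun u v => (hg (f u) (f v)).trans (hf u v)⟩

theorem Iso.emb (h : Iso G H) : Emb G H :=
  let ⟨e, he⟩ := h
  ⟨e.toEmbedding, he⟩

theorem Emb.card_le (h : Emb G H) : G.n ≤ H.n := by
  obtain ⟨f, -⟩ := h
  simpa using Fintype.card_le_of_embedding f

theorem Iso.card_eq (h : Iso G H) : G.n = H.n :=
  le_antisymm h.emb.card_le (iso_symm h).emb.card_le

theorem Emb.iso_of_card_le (h : Emb G H) (hn : H.n ≤ G.n) : Iso G H := by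
  have hcard : G.n = H.n := le_antisymm h.card_le hn
  obtain ⟨f, hf⟩ := h
  have hbij : Function.Bijective f :=
    (Fintype.bijective_iff_injective_and_card f).2 ⟨f.injective, by simpa using hcard⟩
  exact ⟨Equiv.ofBijective f hbij, hf⟩

theorem emb_congr {G' H' : FinDigraph} (hG : Iso G G') (hH : Iso H H') : Emb G H ↔ Emb G' H' :=
  ⟨fun h => (iso_symm hG).emb.trans (h.trans hH.emb),
    fun h => hG.emb.trans (h.trans (iso_symm hH).emb)⟩

theorem toD_eq_toD : toD G = toD H ↔ Iso G H :=
  Quotient.eq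

theorem toD_le_toD : toD G ≤ toD H ↔ Emb G H := by
  refine ⟨?_, fun h => ⟨G, H, rfl, rfl, h⟩⟩
  rintro ⟨G', H', hG, hH, h⟩
  exact (emb_congr (toD_eq_toD.1 hG) (toD_eq_toD.1 hH)).2 h

theorem toD_surjective : Function.Surjective toD :=
  Quotient.mk_surjective

/-- The subdigraph of `G` induced on the image of `f`, with the vertices of `Fin k` as labels. -/
def induce (G : FinDigraph) {k : ℕ} [NeZero k] (f : Fin k ↪ Fin G.n) : FinDigraph :=
  ⟨k, NeZero.pos k, fun u v => G.adj (f u) (f v)⟩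

theorem induce_emb (G : FinDigraph) {k : ℕ} [NeZero k] (f : Fin k ↪ Fin G.n) :
    Emb (G.induce f) G :=
  ⟨f, fun _ _ => rfl⟩

end Embedding

section Level

variable {m : ℕ}

theorem nVerts_mono {x y : D} (hxy : x ≤ y) : nVerts x ≤ nVerts y := by
  obtain ⟨G, rfl⟩ := toD_surjective x
  obtain ⟨H, rfl⟩ := toD_surjective y
  exact (toD_le_toD.1 hxy).card_le

theorem nVerts_lt_nVerts {x y : D} (hxy : x ≤ y) (hyx : ¬ y ≤ x) : nVerts x < nVerts y := by
  obtain ⟨G, rfl⟩ := toD_surjective x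
  obtain ⟨H, rfl⟩ := toD_surjective y
  rw [toD_le_toD] at hxy hyx
  by_contra! hle
  exact hyx (iso_symm (hxy.iso_of_card_le hle)).emb

theorem exists_le_nVerts_eq {k : ℕ} {x : D} (hx : nVerts x = k + 2) :
    ∃ y ≤ x, nVerts y = k + 1 := by
  obtain ⟨G, rfl⟩ := toD_surjective x
  let f : Fin (k + 1) ↪ Fin G.n := Fin.castLEEmb (le_of_le_of_eq (by omega) hx.symm)
  exact ⟨toD (G.induce f), toD_le_toD.2 (G.induce_emb f), rfl⟩

theorem le_nVerts_apply (e : Dn m ≃o Dn m) (x : Dn m) : nVerts x ≤ nVerts (e x) := by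
  have hpos (y : D) : 0 < nVerts y := by
    obtain ⟨G, rfl⟩ := toD_surjective y
    exact G.pos
  induction hk : nVerts x generalizing x with
  | zero => exact Nat.zero_le _
  | succ k ih =>
    obtain _ | k := k
    · exact hpos _
    obtain ⟨y, hyx, hy⟩ := exists_le_nVerts_eq hk
    let y' : Dn m := ⟨y, (nVerts_mono hyx).trans x.2⟩
    have hxy : ¬ x ≤ y' := fun h => by
      have := nVerts_mono (show x.1 ≤ y from h)
      omega
    have hlt : nVerts (e y') < nVerts (e x) :=
      nVerts_lt_nVerts (e.le_iff_le.2 (show y' ≤ x from hyx)) (fun h => hxy (e.le_iff_le.1 h))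
    exact (Nat.succ_le_succ (ih y' hy)).trans hlt

theorem nVerts_apply (e : Dn m ≃o Dn m) (x : Dn m) : nVerts (e x) = nVerts x :=
  le_antisymm (by simpa using le_nVerts_apply e.symm (e x)) (le_nVerts_apply e x)

end Level

section Sends

variable {m : ℕ} {e e' : Dn m ≃o Dn m} {G G' H H' K : FinDigraph}

/-- The order automorphism `e` of `Dn m` maps the class of `G` to the class of `H`. -/
def Sends (e : Dn m ≃o Dn m) (G H : FinDigraph) : Prop :=
  ∃ hG : G.n ≤ m, (e ⟨toD G, hG⟩ : D) = toD H

theorem exists_sends (e : Dn m ≃o Dn m) (hG : G.n ≤ m) : ∃ H, Sends e G H :=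
  let ⟨H, hH⟩ := toD_surjective (e ⟨toD G, hG⟩).1
  ⟨H, hG, hH.symm⟩

theorem sends_one (hG : G.n ≤ m) : Sends (1 : Dn m ≃o Dn m) G G :=
  ⟨hG, rfl⟩

theorem Sends.n_eq (h : Sends e G H) : H.n = G.n := by
  obtain ⟨hG, h⟩ := h
  exact (congrArg nVerts h).symm.trans (nVerts_apply e ⟨toD G, hG⟩)

theorem Sends.emb_iff (h : Sends e G H) (h' : Sends e G' H') : Emb G G' ↔ Emb H H' := by
  obtain ⟨hG, h⟩ := h
  obtain ⟨hG', h'⟩ := h'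
  rw [← toD_le_toD, ← toD_le_toD, ← h, ← h']
  exact (e.le_iff_le (x := ⟨toD G, hG⟩) (y := ⟨toD G', hG'⟩)).symm

theorem Sends.congr (h : Sends e G H) (hG : Iso G G') (hH : Iso H H') : Sends e G' H' := by
  obtain ⟨hn, h⟩ := h
  refine ⟨(iso_symm hG).emb.card_le.trans hn, ?_⟩
  simp only [← toD_eq_toD.2 hG, ← toD_eq_toD.2 hH, h]

theorem Sends.iso_right (h : Sends e G H) (h' : Sends e G H') : Iso H H' := by
  obtain ⟨_, h⟩ := h
  obtain ⟨_, h'⟩ := h'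
  exact toD_eq_toD.1 (h.symm.trans h')

theorem Sends.symm (h : Sends e G H) : Sends e⁻¹ H G := by
  have hn := h.n_eq
  obtain ⟨hG, h⟩ := h
  refine ⟨hn.trans_le hG, ?_⟩
  have : e ⟨toD G, hG⟩ = ⟨toD H, hn.trans_le hG⟩ := Subtype.ext h
  rw [← this, RelIso.inv_apply_self]

theorem Sends.mul (h : Sends e G H) (h' : Sends e' H K) : Sends (e' * e) G K := by
  obtain ⟨hG, h⟩ := h
  obtain ⟨hH, h'⟩ := h'
  refine ⟨hG, ?_⟩
  have : e ⟨toD G, hG⟩ = ⟨toD H, hH⟩ := Subtype.ext h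
  rw [RelIso.mul_apply, this, h']

theorem Sends.iso_left (h : Sends e G H) (h' : Sends e G' H) : Iso G G' :=
  h.symm.iso_right h'.symm

theorem Sends.exists_emb (h : Sends e G H) (hGG' : Emb G' G) : ∃ H', Sends e G' H' ∧ Emb H' H := by
  obtain ⟨H', h'⟩ := exists_sends e (hGG'.card_le.trans h.1)
  exact ⟨H', h', (h'.emb_iff h).1 hGG'⟩

theorem Sends.exists_emb_symm (h : Sends e G H) (hHH' : Emb H' H) :
    ∃ G', Sends e G' H' ∧ Emb G' G := by
  obtain ⟨G', h', hE⟩ := h.symm.exists_emb hHH'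
  exact ⟨G', h'.symm, hE⟩

end Sends

section Restriction

variable {m n : ℕ}

/-- Restriction of order automorphisms to the classes with at most `n` vertices. -/
def restrictHom (h : n ≤ m) : (Dn m ≃o Dn m) →* (Dn n ≃o Dn n) where
  toFun e :=
    { toFun := fun x => ⟨e ⟨x, x.2.trans h⟩, (nVerts_apply e _).trans_le x.2⟩
      invFun := fun x => ⟨e.symm ⟨x, x.2.trans h⟩, (nVerts_apply e.symm _).trans_le x.2⟩
      left_inv := fun x => Subtype.ext (by simp only [e.symm_apply_apply])
      right_inv := fun x => Subtype.ext (by simp only [e.apply_symm_apply])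
      map_rel_iff' := fun {x y} =>
        e.le_iff_le (x := ⟨x, x.2.trans h⟩) (y := ⟨y, y.2.trans h⟩) }
  map_one' := rfl
  map_mul' _ _ := rfl

/-- The order automorphism `e` fixes all classes of digraphs with at most `k` vertices. -/
def FixesUpTo (e : Dn m ≃o Dn m) (k : ℕ) : Prop :=
  ∀ G : FinDigraph, G.n ≤ k → Sends e G G

theorem restrictHom_eq_one {e : Dn m ≃o Dn m} {h : n ≤ m} :
    restrictHom h e = 1 ↔ FixesUpTo e n := by
  constructor
  · intro he G hG
    exact ⟨hG.trans h, congrArg (fun g : Dn n ≃o Dn n => (g ⟨toD G, hG⟩ : D)) he⟩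
  · intro he
    ext ⟨⟨G⟩, hG⟩
    exact (he G hG).2

theorem range_restrictHom :
    ((restrictHom (show 3 ≤ 4 by decide)).range : Set (Dn 3 ≃o Dn 3)) = Aut3D4Iso := by
  ext g
  constructor
  · rintro ⟨e, rfl⟩
    exact ⟨e, ⟨e.bijective, fun _ _ => e.le_iff_le.symm⟩, fun _ => rfl⟩
  · rintro ⟨ψ, ⟨hbij, hle⟩, hψ⟩
    exact ⟨⟨Equiv.ofBijective ψ hbij, (hle _ _).symm⟩,
      RelIso.ext fun x => Subtype.ext (hψ x).symm⟩

end Restriction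

section Action

/-- An action of a group on digraphs that respects the number of vertices and the induced
subdigraph relation, and hence acts on each `Dn m` by order automorphisms. -/
class EmbAction (K : Type*) [Group K] extends MulAction K FinDigraph where
  n_smul : ∀ (k : K) (G : FinDigraph), (k • G).n = G.n
  emb_smul : ∀ (k : K) {G H : FinDigraph}, Emb G H → Emb (k • G) (k • H)

variable {K : Type*} [Group K] [EmbAction K] {m n : ℕ}

theorem iso_smul (k : K) {G H : FinDigraph} (h : Iso G H) : Iso (k • G) (k • H) := by
  refine (EmbAction.emb_smul k h.emb).iso_of_card_le ?_
  rw [EmbAction.n_smul, EmbAction.n_smul]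
  exact (iso_symm h).emb.card_le

theorem nVerts_map_smul (k : K) (x : D) :
    nVerts (Quotient.map (k • ·) (fun _ _ => iso_smul k) x) = nVerts x := by
  obtain ⟨G, rfl⟩ := toD_surjective x
  exact EmbAction.n_smul k G

/-- The order automorphisms of `Dn m` induced by an action on digraphs. -/
def levelHom (K : Type*) [Group K] [EmbAction K] (m : ℕ) : K →* (Dn m ≃o Dn m) where
  toFun k :=
    { toFun := fun x => ⟨Quotient.map (k • ·) (fun _ _ => iso_smul k) x.1,
        (nVerts_map_smul k x.1).trans_le x.2⟩
      invFun := fun x => ⟨Quotient.map (k⁻¹ • ·) (fun _ _ => iso_smul k⁻¹) x.1,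
        (nVerts_map_smul k⁻¹ x.1).trans_le x.2⟩
      left_inv := by
        rintro ⟨⟨G⟩, hG⟩
        exact Subtype.ext (congrArg toD (inv_smul_smul k G))
      right_inv := by
        rintro ⟨⟨G⟩, hG⟩
        exact Subtype.ext (congrArg toD (smul_inv_smul k G))
      map_rel_iff' := by
        rintro ⟨⟨G⟩, hG⟩ ⟨⟨H⟩, hH⟩
        refine toD_le_toD.trans (Iff.trans ⟨fun h => ?_, EmbAction.emb_smul k⟩ toD_le_toD.symm)
        simpa using EmbAction.emb_smul k⁻¹ h }
  map_one' := by
    ext ⟨⟨G⟩, hG⟩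
    exact congrArg toD (one_smul K G)
  map_mul' k l := by
    ext ⟨⟨G⟩, hG⟩
    exact congrArg toD (mul_smul k l G)

theorem sends_levelHom (k : K) {G : FinDigraph} (hG : G.n ≤ m) :
    Sends (levelHom K m k) G (k • G) :=
  ⟨hG, rfl⟩

theorem Sends.conj_levelHom {e : Dn m ≃o Dn m} {G H : FinDigraph} (h : Sends e G H) (k : K) :
    Sends (MulAut.conj (levelHom K m k) e) (k • G) (k • H) := by
  have hG : G.n ≤ m := h.1
  exact (sends_levelHom k hG).symm.mul (h.mul (sends_levelHom k (h.n_eq.trans_le hG)))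

theorem sends_conj_levelHom (k : K) {e : Dn m ≃o Dn m} {G H : FinDigraph} :
    Sends (MulAut.conj (levelHom K m k) e) (k • G) (k • H) ↔ Sends e G H := by
  refine ⟨fun h => ?_, fun h => h.conj_levelHom k⟩
  simpa [mul_assoc] using h.conj_levelHom k⁻¹

theorem FixesUpTo.conj_levelHom {e : Dn m ≃o Dn m} (he : FixesUpTo e n) (k : K) :
    FixesUpTo (MulAut.conj (levelHom K m k) e) n := by
  intro G hG
  simpa using (he (k⁻¹ • G) ((EmbAction.n_smul _ _).trans_le hG)).conj_levelHom k

theorem restrictHom_levelHom (h : n ≤ m) (k : K) :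
    restrictHom h (levelHom K m k) = levelHom K n k :=
  rfl

end Action

section Recoloring

/-- The group of parameters `((p, q, r, s), π)` of the automorphisms of `D` that only change the
edges between distinct vertices. -/
abbrev Recoloring : Type :=
  Multiplicative (ZMod 2 × ZMod 2 × ZMod 2 × ZMod 2) × Equiv.Perm (Bool × Bool)

/-- The action on the edges `t` between two vertices without loops, or with loops: `p` exchanges
the presence and the absence of both edges, while `r` reverses single edges. -/
def toggle (p r : ZMod 2) (t : Bool × Bool) : Bool × Bool :=
  if t.1 = t.2 then (t.1 ^^ p = 1, t.2 ^^ p = 1) else if r = 1 then t.swap else t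

theorem toggle_zero_zero (t : Bool × Bool) : toggle 0 0 t = t := by
  revert t; decide

theorem toggle_add (p p' r r' : ZMod 2) (t : Bool × Bool) :
    toggle (p + p') (r + r') t = toggle p r (toggle p' r' t) := by
  revert p p' r r' t; decide

theorem toggle_swap (p r : ZMod 2) (t : Bool × Bool) :
    toggle p r t.swap = (toggle p r t).swap := by
  revert p r t; decide

/-- The action of `m` on the edges `t = (adj u v, adj v u)` between distinct vertices `u` and `v`,
where `a` and `b` tell whether there are loops at `u` and at `v`. -/
def recolorPair (m : Recoloring) (a b : Bool) (t : Bool × Bool) : Bool × Bool :=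
  let (p, q, r, s) := m.1.toAdd
  match a, b with
  | false, false => toggle p r t
  | true, true => toggle q s t
  | true, false => m.2 t
  | false, true => (m.2 t.swap).swap

theorem recolorPair_one (a b : Bool) (t : Bool × Bool) : recolorPair 1 a b t = t := by
  cases a <;> cases b <;> first | exact toggle_zero_zero t | rfl

theorem recolorPair_mul (m m' : Recoloring) (a b : Bool) (t : Bool × Bool) :
    recolorPair (m * m') a b t = recolorPair m a b (recolorPair m' a b t) := by
  cases a <;> cases b <;> first | exact toggle_add .. | rfl

theorem recolorPair_swap (m : Recoloring) (a b : Bool) (t : Bool × Bool) :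
    recolorPair m b a t.swap = (recolorPair m a b t).swap := by
  cases a <;> cases b <;> first | exact toggle_swap .. | rfl

instance : SMul Recoloring FinDigraph where
  smul m G := ⟨G.n, G.pos, fun u v => if u = v then G.adj u v else
    (recolorPair m (G.adj u u) (G.adj v v) (G.adj u v, G.adj v u)).1⟩

theorem recolor_adj_self (m : Recoloring) (G : FinDigraph) (u : Fin G.n) :
    (m • G).adj u u = G.adj u u :=
  if_pos rfl

theorem recolor_adj_of_ne (m : Recoloring) (G : FinDigraph) {u v : Fin G.n} (huv : u ≠ v) :
    (m • G).adj u v = (recolorPair m (G.adj u u) (G.adj v v) (G.adj u v, G.adj v u)).1 :=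
  if_neg huv

theorem recolor_adj_pair (m : Recoloring) (G : FinDigraph) {u v : Fin G.n} (huv : u ≠ v) :
    ((m • G).adj u v, (m • G).adj v u) =
      recolorPair m (G.adj u u) (G.adj v v) (G.adj u v, G.adj v u) := by
  rw [recolor_adj_of_ne m G huv, recolor_adj_of_ne m G huv.symm]
  exact Prod.ext rfl (congrArg Prod.fst (recolorPair_swap m _ _ (G.adj u v, G.adj v u)))

theorem mk_adj_congr {n : ℕ} {hn : 0 < n} {a b : Fin n → Fin n → Bool}
    (h : ∀ u v, a u v = b u v) : (⟨n, hn, a⟩ : FinDigraph) = ⟨n, hn, b⟩ :=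
  congrArg _ (funext₂ h)

instance : EmbAction Recoloring where
  one_smul G := mk_adj_congr fun u v => by simp [recolorPair_one]
  mul_smul m m' G := mk_adj_congr fun u v => by
    by_cases huv : u = v
    · subst huv
      simp [recolor_adj_self]
    · rw [if_neg huv, if_neg huv, recolor_adj_pair m' G huv, recolorPair_mul, recolor_adj_self,
        recolor_adj_self]
  n_smul _ _ := rfl
  emb_smul m G H := by
    rintro ⟨f, hf⟩
    refine ⟨f, fun u v => ?_⟩
    by_cases huv : u = v
    · subst huv
      rw [recolor_adj_self, recolor_adj_self, hf]
    · rw [recolor_adj_of_ne m G huv, recolor_adj_of_ne m H (f.injective.ne huv)]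
      simp only [hf]

end Recoloring

section LoopComplement

instance : SMul (Multiplicative (ZMod 2)) FinDigraph where
  smul b G := ⟨G.n, G.pos, fun u v => G.adj u v ^^ (u = v ∧ b.toAdd = 1)⟩

theorem flip_adj (b : Multiplicative (ZMod 2)) (G : FinDigraph) (u v : Fin G.n) :
    (b • G).adj u v = (G.adj u v ^^ (u = v ∧ b.toAdd = 1)) :=
  rfl

theorem flip_adj_self (G : FinDigraph) (u : Fin G.n) :
    (Multiplicative.ofAdd (1 : ZMod 2) • G).adj u u = !G.adj u u := by
  simp [flip_adj]

theorem flip_adj_of_ne (b : Multiplicative (ZMod 2)) (G : FinDigraph) {u v : Fin G.n}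
    (huv : u ≠ v) : (b • G).adj u v = G.adj u v := by
  simp [flip_adj, huv]

instance : EmbAction (Multiplicative (ZMod 2)) where
  one_smul G := mk_adj_congr fun u v => by simp
  mul_smul b b' G := mk_adj_congr fun u v => by
    have xor_mul : ∀ (b b' : ZMod 2) (x : Bool), (x ^^ b + b' = 1) = ((x ^^ b' = 1) ^^ b = 1) := by
      decide
    by_cases huv : u = v
    · subst huv
      simpa [flip_adj] using xor_mul b.toAdd b'.toAdd (G.adj u u)
    · simp [flip_adj, huv]
  n_smul _ _ := rfl
  emb_smul b G H := by
    rintro ⟨f, hf⟩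
    exact ⟨f, fun u v => by simp only [flip_adj, hf, f.injective.eq_iff]⟩

/-- The recolouring that loop complementation conjugates `m` to. -/
def dual (m : Recoloring) : Recoloring :=
  let (p, q, r, s) := m.1.toAdd
  (Multiplicative.ofAdd (q, p, s, r), sigmaSwap * m.2 * sigmaSwap)

theorem recolorPair_dual (m : Recoloring) (a b : Bool) (t : Bool × Bool) :
    recolorPair (dual m) (!a) (!b) t = recolorPair m a b t := by
  cases a <;> cases b <;> rfl

theorem flip_smul_recolor (m : Recoloring) (G : FinDigraph) :
    Multiplicative.ofAdd (1 : ZMod 2) • m • G = dual m • Multiplicative.ofAdd (1 : ZMod 2) • G :=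
  mk_adj_congr fun u v => by
    by_cases huv : u = v
    · subst huv
      simp [recolor_adj_self, flip_adj_self]
    · simp only [huv, if_false, flip_adj_self, recolorPair_dual, flip_adj_of_ne _ G huv,
        flip_adj_of_ne _ G (Ne.symm huv), false_and, decide_false, Bool.xor_false,
        recolor_adj_of_ne m G huv]

end LoopComplement

section SemidirectProduct

variable {α : Multiplicative (ZMod 2) →* MulAut Recoloring}

theorem levelHom_conj (hα : ∀ c, α (Multiplicative.ofAdd 1) c = dual c) (m : ℕ)
    (b : Multiplicative (ZMod 2)) :
    (levelHom Recoloring m).comp (α b).toMonoidHom =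
      (MulAut.conj (levelHom _ m b)).toMonoidHom.comp (levelHom Recoloring m) := by
  have hb : b = 1 ∨ b = Multiplicative.ofAdd 1 := by revert b; decide
  ext1 c
  obtain rfl | rfl := hb
  · simp
  · refine eq_mul_inv_of_mul_eq ?_
    ext ⟨⟨G⟩, hG⟩
    exact congrArg toD <| (congrArg (· • _) (hα c)).trans (flip_smul_recolor c G).symm

/-- The order automorphisms of `Dn m` defined by the parameters `(p, q, r, s, π)` and by loop
complementation. -/
def semidirectHom (hα : ∀ c, α (Multiplicative.ofAdd 1) c = dual c) (m : ℕ) :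
    Recoloring ⋊[α] Multiplicative (ZMod 2) →* (Dn m ≃o Dn m) :=
  SemidirectProduct.lift (levelHom Recoloring m) (levelHom _ m) (levelHom_conj hα m)

theorem restrictHom_semidirectHom (hα : ∀ c, α (Multiplicative.ofAdd 1) c = dual c) {m n : ℕ}
    (h : n ≤ m) (g : Recoloring ⋊[α] Multiplicative (ZMod 2)) :
    restrictHom h (semidirectHom hα m g) = semidirectHom hα n g :=
  rfl

end SemidirectProduct

section SmallDigraphs

/-- The digraph with one vertex, looped if and only if `a` holds. -/
def point (a : Bool) : FinDigraph :=
  ⟨1, one_pos, fun _ _ => a⟩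

/-- The digraph with two vertices whose loops are given by `a` and `b`, and whose edges from `0`
to `1` and back are given by `t`. -/
def dyad (a b : Bool) (t : Bool × Bool) : FinDigraph :=
  ⟨2, two_pos, ![![a, t.1], ![t.2, b]]⟩

/-- The cyclic tournament on three vertices, with loops if `a` holds. -/
def cyclicTriple (a : Bool) : FinDigraph :=
  ⟨3, three_pos, ![![a, true, false], ![false, a, true], ![true, false, a]]⟩

/-- The transitive tournament on three vertices, with loops if `a` holds. -/
def transitiveTriple (a : Bool) : FinDigraph :=
  ⟨3, three_pos, ![![a, true, true], ![false, a, true], ![false, false, a]]⟩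

variable {G H : FinDigraph} {a b : Bool} {t : Bool × Bool}

theorem point_emb_iff : Emb (point a) G ↔ ∃ u, G.adj u u = a := by
  constructor
  · rintro ⟨f, hf⟩
    exact ⟨f (0 : Fin 1), hf (0 : Fin 1) (0 : Fin 1)⟩
  · rintro ⟨u, hu⟩
    exact ⟨⟨fun _ => u, fun _ _ _ => Subsingleton.elim (α := Fin 1) _ _⟩, fun _ _ => hu⟩

theorem dyad_emb_iff : Emb (dyad a b t) G ↔
    ∃ u v, u ≠ v ∧ G.adj u u = a ∧ G.adj v v = b ∧ (G.adj u v, G.adj v u) = t := by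
  constructor
  · rintro ⟨f, hf⟩
    have h : ∀ i j : Fin 2, G.adj (f i) (f j) = (dyad a b t).adj i j := hf
    exact ⟨f (0 : Fin 2), f (1 : Fin 2), f.injective.ne Fin.zero_ne_one, h 0 0, h 1 1,
      Prod.ext (h 0 1) (h 1 0)⟩
  · rintro ⟨u, v, huv, rfl, rfl, rfl⟩
    exact ⟨Function.Embedding.embFinTwo huv, Fin.forall_fin_two.2
      ⟨Fin.forall_fin_two.2 ⟨rfl, rfl⟩, Fin.forall_fin_two.2 ⟨rfl, rfl⟩⟩⟩

theorem exists_iso_point (hG : G.n = 1) : ∃ a, Iso G (point a) := by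
  have ha : Emb (point (G.adj ⟨0, G.pos⟩ ⟨0, G.pos⟩)) G := point_emb_iff.2 ⟨_, rfl⟩
  exact ⟨_, iso_symm (ha.iso_of_card_le hG.le)⟩

theorem exists_iso_dyad (hG : G.n = 2) : ∃ a b t, Iso G (dyad a b t) := by
  have huv : (⟨0, G.pos⟩ : Fin G.n) ≠ ⟨1, by omega⟩ := by simp
  exact ⟨_, _, _, iso_symm <|
    (dyad_emb_iff.2 ⟨_, _, huv, rfl, rfl, rfl⟩).iso_of_card_le hG.le⟩

theorem iso_dyad_iff {a' b' : Bool} {t' : Bool × Bool} :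
    Iso (dyad a b t) (dyad a' b' t') ↔
      a = a' ∧ b = b' ∧ t = t' ∨ a = b' ∧ b = a' ∧ t = t'.swap := by
  have hE : Iso (dyad a b t) (dyad a' b' t') ↔ Emb (dyad a b t) (dyad a' b' t') :=
    ⟨Iso.emb, fun h => h.iso_of_card_le le_rfl⟩
  rw [hE, dyad_emb_iff]
  simp only [dyad, Fin.exists_fin_two]
  simp [Prod.ext_iff, eq_comm]

theorem iso_dyad_swap : Iso (dyad a b t) (dyad b a t.swap) :=
  iso_dyad_iff.2 (.inr ⟨rfl, rfl, rfl⟩)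

theorem not_iso_cyclicTriple_transitiveTriple :
    ¬ Iso (cyclicTriple a) (transitiveTriple a) := by
  revert a
  change ∀ a, ¬ ∃ e : Fin 3 ≃ Fin 3, ∀ u v : Fin 3,
    (![![a, true, true], ![false, a, true], ![false, false, a]] : Fin 3 → Fin 3 → Bool)
      (e u) (e v) =
    (![![a, true, false], ![false, a, true], ![true, false, a]] : Fin 3 → Fin 3 → Bool) u v
  decide

theorem recolor_point (m : Recoloring) : m • point a = point a :=
  mk_adj_congr fun _ _ => if_pos (Subsingleton.elim (α := Fin 1) _ _)

theorem flip_point : Multiplicative.ofAdd (1 : ZMod 2) • point a = point !a :=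
  mk_adj_congr (by simp [point])

theorem recolor_dyad (m : Recoloring) : m • dyad a b t = dyad a b (recolorPair m a b t) :=
  mk_adj_congr (Fin.forall_fin_two.2 ⟨Fin.forall_fin_two.2 ⟨rfl, rfl⟩,
    Fin.forall_fin_two.2 ⟨congrArg Prod.fst (recolorPair_swap m a b t), rfl⟩⟩)

end SmallDigraphs

section LevelTwo

variable {m : ℕ} {e : Dn m ≃o Dn m} {a b : Bool} {t : Bool × Bool}

theorem fixesUpTo_two (hpoint : ∀ a, Sends e (point a) (point a))
    (hdyad : ∀ a b t, Sends e (dyad a b t) (dyad a b t)) : FixesUpTo e 2 := by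
  intro G hG
  obtain hn | hn : G.n = 1 ∨ G.n = 2 := by have := G.pos; omega
  · obtain ⟨a, ha⟩ := exists_iso_point hn
    exact (hpoint a).congr (iso_symm ha) (iso_symm ha)
  · obtain ⟨a, b, t, h⟩ := exists_iso_dyad hn
    exact (hdyad a b t).congr (iso_symm h) (iso_symm h)

theorem iso_point_iff : Iso (point a) (point b) ↔ a = b :=
  ⟨fun h => (point_emb_iff.1 h.emb).elim fun _ => Eq.symm, by rintro rfl; exact iso_refl _⟩

theorem exists_sends_point (e : Dn m ≃o Dn m) (hm : 1 ≤ m) (a : Bool) :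
    ∃ b, Sends e (point a) (point b) := by
  obtain ⟨H, hH⟩ := exists_sends e (G := point a) hm
  obtain ⟨b, hb⟩ := exists_iso_point hH.n_eq
  exact ⟨b, hH.congr (iso_refl _) hb⟩

theorem sends_point_of_false (hm : 1 ≤ m) (he : Sends e (point false) (point false)) (a : Bool) :
    Sends e (point a) (point a) := by
  cases a
  · exact he
  · obtain ⟨b, hb⟩ := exists_sends_point e hm true
    cases b
    · exact absurd (iso_point_iff.1 (he.iso_left hb)) Bool.false_ne_true
    · exact hb

theorem exists_sends_dyad (hm : 2 ≤ m) (he : ∀ c, Sends e (point c) (point c)) (a b : Bool)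
    (t : Bool × Bool) : ∃ t', Sends e (dyad a b t) (dyad a b t') := by
  obtain ⟨H, hH⟩ := exists_sends e (G := dyad a b t) hm
  obtain ⟨a', b', t', h⟩ := exists_iso_dyad hH.n_eq
  replace hH := hH.congr (iso_refl _) h
  have hloop (c : Bool) : c = a ∨ c = b ↔ c = a' ∨ c = b' := by
    simpa [point_emb_iff, dyad, Fin.exists_fin_two, eq_comm] using (he c).emb_iff hH
  obtain ⟨rfl, rfl⟩ | ⟨rfl, rfl⟩ : a' = a ∧ b' = b ∨ a' = b ∧ b' = a := by
    clear hH h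
    revert a b a' b'
    decide
  · exact ⟨t', hH⟩
  · exact ⟨t'.swap, hH.congr (iso_refl _) iso_dyad_swap⟩

theorem exists_sends_dyad_perm (hm : 2 ≤ m) (he : ∀ c, Sends e (point c) (point c)) :
    ∃ π : Equiv.Perm (Bool × Bool), ∀ t, Sends e (dyad true false t) (dyad true false (π t)) := by
  choose f hf using exists_sends_dyad hm he true false
  have hinj : Function.Injective f := fun t t' h => by
    obtain ⟨-, -, h⟩ | ⟨h, -⟩ := iso_dyad_iff.1 ((hf t).iso_left (h ▸ hf t'))
    exacts [h, (Bool.false_ne_true h.symm).elim]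
  exact ⟨.ofBijective f (Finite.injective_iff_bijective.1 hinj), hf⟩

/-- Every two vertices of `G` induce a subdigraph isomorphic to `dyad a a t`. -/
def IsHomogeneous (a : Bool) (t : Bool × Bool) (G : FinDigraph) : Prop :=
  ∀ K, K.n = 2 → Emb K G → Iso K (dyad a a t)

theorem isHomogeneous_iff {G : FinDigraph} : IsHomogeneous a t G ↔
    ∀ u v, u ≠ v → G.adj u u = a ∧ ((G.adj u v, G.adj v u) = t ∨ (G.adj v u, G.adj u v) = t) := by
  constructor
  · intro h u v huv
    obtain ⟨hu, -, ht⟩ | ⟨hu, -, ht⟩ :=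
      iso_dyad_iff.1 (h _ rfl (dyad_emb_iff.2 ⟨u, v, huv, rfl, rfl, rfl⟩))
    · exact ⟨hu, .inl ht⟩
    · exact ⟨hu, .inr (congrArg Prod.swap ht)⟩
  · intro h K hK hKG
    obtain ⟨b, c, t', hK⟩ := exists_iso_dyad hK
    obtain ⟨u, v, huv, rfl, rfl, rfl⟩ := dyad_emb_iff.1 ((iso_symm hK).emb.trans hKG)
    obtain ⟨hu, ht⟩ := h u v huv
    have hv := (h v u huv.symm).1
    exact iso_trans hK (iso_dyad_iff.2 (ht.imp (⟨hu, hv, ·⟩) (⟨hu, hv, congrArg Prod.swap ·⟩)))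

theorem Sends.isHomogeneous {G H : FinDigraph} {t t' : Bool × Bool} (h : Sends e G H)
    (ht : Sends e (dyad a a t) (dyad a a t')) (hG : IsHomogeneous a t G) :
    IsHomogeneous a t' H := by
  intro K hK hKH
  obtain ⟨K', hK', hE⟩ := h.exists_emb_symm hKH
  have hiso := hG K' (hK'.n_eq.symm.trans hK) hE
  exact iso_symm (ht.iso_right (hK'.congr hiso (iso_refl _)))

theorem IsHomogeneous.iso {G H : FinDigraph} {c : Bool} (hG : IsHomogeneous a (c, c) G)
    (hH : IsHomogeneous a (c, c) H) (hn : G.n = H.n) (h2 : 2 ≤ G.n) : Iso G H := by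
  have adj_eq {G : FinDigraph} (hG : IsHomogeneous a (c, c) G) (h2 : 2 ≤ G.n) (u v : Fin G.n) :
      G.adj u v = if u = v then a else c := by
    rw [isHomogeneous_iff] at hG
    split_ifs with huv
    · have : Nontrivial (Fin G.n) := Fin.nontrivial_iff_two_le.2 h2
      obtain ⟨w, hw⟩ := exists_ne u
      exact huv ▸ (hG u w hw.symm).1
    · obtain ht | ht := (hG u v huv).2
      exacts [congrArg Prod.fst ht, congrArg Prod.snd ht]
  refine ⟨finCongr hn, fun u v => ?_⟩
  rw [adj_eq hG h2, adj_eq hH (hn ▸ h2)]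
  simp only [EmbeddingLike.apply_eq_iff_eq]

theorem isHomogeneous_cyclicTriple : IsHomogeneous a (true, false) (cyclicTriple a) := by
  rw [isHomogeneous_iff]
  change ∀ u v : Fin 3, _
  simp [Fin.forall_fin_succ, cyclicTriple]

theorem isHomogeneous_transitiveTriple : IsHomogeneous a (true, false) (transitiveTriple a) := by
  rw [isHomogeneous_iff]
  change ∀ u v : Fin 3, _
  simp [Fin.forall_fin_succ, transitiveTriple]

theorem iso_dyad_self_iff {t' : Bool × Bool} :
    Iso (dyad a a t) (dyad a a t') ↔ t = t' ∨ t = t'.swap := by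
  simp [iso_dyad_iff]

theorem eq_or_eq_swap_of_fst_ne_snd {s t : Bool × Bool} (hs : s.1 ≠ s.2) (ht : t.1 ≠ t.2) :
    s = t ∨ s = t.swap := by
  revert s t
  decide

/-- All edges between distinct vertices of the images of the two tournaments would be alike if
the image of a single edge were symmetric, making these images isomorphic. -/
theorem Sends.fst_ne_snd {s : Bool × Bool} (hm : 3 ≤ m)
    (h : Sends e (dyad a a s) (dyad a a t)) (hs : s.1 ≠ s.2) : t.1 ≠ t.2 := by
  replace h : Sends e (dyad a a (true, false)) (dyad a a t) := h.congr
    (iso_dyad_self_iff.2 (eq_or_eq_swap_of_fst_ne_snd hs (by decide))) (iso_refl _)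
  intro ht
  obtain ⟨c, rfl⟩ : ∃ c, t = (c, c) := ⟨t.2, Prod.ext ht rfl⟩
  obtain ⟨K, hK⟩ := exists_sends e (G := cyclicTriple a) hm
  obtain ⟨L, hL⟩ := exists_sends e (G := transitiveTriple a) hm
  have hKL : Iso K L := (hK.isHomogeneous h isHomogeneous_cyclicTriple).iso
    (hL.isHomogeneous h isHomogeneous_transitiveTriple) (hK.n_eq.trans hL.n_eq.symm)
    (le_of_le_of_eq (by decide : 2 ≤ 3) hK.n_eq.symm)
  exact not_iso_cyclicTriple_transitiveTriple
    ((hK.congr (iso_refl _) hKL).iso_left hL)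

theorem exists_sends_dyad_toggle (hm : 3 ≤ m) (he : ∀ c, Sends e (point c) (point c)) (a : Bool) :
    ∃ p, ∀ t, Sends e (dyad a a t) (dyad a a (toggle p 0 t)) := by
  choose f hf using exists_sends_dyad (by omega : 2 ≤ m) he a a
  have hinj (t t') (h : f t = f t' ∨ f t = (f t').swap) : t = t' ∨ t = t'.swap :=
    iso_dyad_self_iff.1 ((hf t).iso_left ((hf t').congr (iso_refl _)
      (iso_symm (iso_dyad_self_iff.2 h))))
  have hsingle (t) (ht : t.1 ≠ t.2) : (f t).1 ≠ (f t).2 := (hf t).fst_ne_snd hm ht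
  have hsymm (c : Bool) : ∃ d, f (c, c) = (d, d) := by
    refine ⟨(f (c, c)).1, Prod.ext rfl (of_not_not fun hc => ?_)⟩
    have := hinj _ _ (eq_or_eq_swap_of_fst_ne_snd (Ne.symm hc) (hsingle (true, false) (by decide)))
    cases c <;> simp at this
  choose d hd using hsymm
  have hne : d true ≠ d false := fun h => by
    simpa using hinj (true, true) (false, false) (.inl (by rw [hd, hd, h]))
  refine ⟨if d false then 1 else 0, fun t => (hf t).congr (iso_refl _) (iso_dyad_self_iff.2 ?_)⟩
  by_cases ht : t.1 = t.2
  · obtain ⟨c, rfl⟩ : ∃ c, t = (c, c) := ⟨t.2, Prod.ext ht rfl⟩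
    left
    cases c <;> cases h : d false <;> simp [hd, h, toggle, Bool.eq_not.2 hne]
  · exact eq_or_eq_swap_of_fst_ne_snd (hsingle t ht) (by simp [toggle, ht])

theorem exists_sends_dyad_recolorPair (hm : 3 ≤ m) (he : ∀ c, Sends e (point c) (point c)) :
    ∃ c : Recoloring, ∀ a b t, Sends e (dyad a b t) (dyad a b (recolorPair c a b t)) := by
  choose p hp using exists_sends_dyad_toggle hm he
  obtain ⟨π, hπ⟩ := exists_sends_dyad_perm (by omega) he
  refine ⟨(.ofAdd (p false, p true, 0, 0), π), fun a b t => ?_⟩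
  match a, b with
  | false, false => exact hp false t
  | true, true => exact hp true t
  | true, false => exact hπ t
  | false, true => exact (hπ t.swap).congr iso_dyad_swap iso_dyad_swap

end LevelTwo

section Cone

variable {m : ℕ} {e : Dn m ≃o Dn m} {G H : FinDigraph}

/-- No vertex of `G` has a loop. -/
def Loopless (G : FinDigraph) : Prop :=
  ∀ u, G.adj u u = false

/-- The digraph obtained from `G` by adding a looped vertex `0`, the apex; the colour `s v` of a
vertex `v` of `G` records the edges from the apex to `v` and back. -/
def cone (G : FinDigraph) (s : Fin G.n → Bool × Bool) : FinDigraph :=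
  ⟨G.n + 1, G.n.succ_pos, fun u v => Fin.cases (Fin.cases true (fun v => (s v).1) v)
    (fun u => Fin.cases (s u).2 (fun v => G.adj u v) v) u⟩

/-- The induced subdigraph relation for digraphs whose vertices are coloured by `s` and `t`. -/
def ColoredEmb (G : FinDigraph) (s : Fin G.n → Bool × Bool) (H : FinDigraph)
    (t : Fin H.n → Bool × Bool) : Prop :=
  ∃ f : Fin G.n ↪ Fin H.n, (∀ u v, H.adj (f u) (f v) = G.adj u v) ∧ ∀ u, t (f u) = s u

theorem cone_emb_of_forall_eq (s : Fin H.n → Bool × Bool) (w : Fin G.n) (hw : G.adj w w = true)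
    (f : Fin H.n ↪ Fin G.n) (hfw : ∀ u, f u ≠ w) (hf : ∀ u v, G.adj (f u) (f v) = H.adj u v)
    (hs : ∀ u, (G.adj w (f u), G.adj (f u) w) = s u) : Emb (H.cone s) G := by
  refine ⟨⟨Fin.cons w f, Fin.cons_injective_iff.2 ⟨?_, f.injective⟩⟩, ?_⟩
  · rintro ⟨u, hu⟩
    exact hfw u hu
  · intro u v
    cases u using Fin.cases <;> cases v using Fin.cases
    · exact hw
    · exact congrArg Prod.fst (hs _)
    · exact congrArg Prod.snd (hs _)
    · exact hf _ _

theorem cone_emb_cone_iff {s : Fin G.n → Bool × Bool} {t : Fin H.n → Bool × Bool}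
    (hH : Loopless H) : Emb (G.cone s) (H.cone t) ↔ ColoredEmb G s H t := by
  constructor
  · rintro ⟨(f : Fin (G.n + 1) ↪ Fin (H.n + 1)), hf⟩
    replace hf {i j : Fin (G.n + 1)} {i' j' : Fin (H.n + 1)} (hi : f i = i') (hj : f j = j') :
        (H.cone t).adj i' j' = (G.cone s).adj i j := by
      subst hi hj
      exact hf i j
    have hf0 : f 0 = 0 := by
      obtain h | ⟨v, hv⟩ := Fin.eq_zero_or_eq_succ (f 0)
      · exact h
      · exact Bool.noConfusion (show true = false from (hf hv hv).symm.trans (hH v))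
    have hf1 (u : Fin G.n) : f u.succ ≠ 0 := fun h =>
      u.succ_ne_zero (f.injective (h.trans hf0.symm))
    choose g hg using fun u => Fin.exists_succ_eq.2 (hf1 u)
    refine ⟨⟨g, fun u v huv => ?_⟩, fun u v => hf (hg u).symm (hg v).symm,
      fun u => Prod.ext (hf hf0 (hg u).symm) (hf (hg u).symm hf0)⟩
    exact Fin.succ_injective _ (f.injective (by rw [← hg, ← hg, huv]))
  · rintro ⟨f, hf, ht⟩
    exact cone_emb_of_forall_eq s (0 : Fin (H.n + 1)) rfl (f.trans (Fin.succEmb _))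
      (fun u => (f u).succ_ne_zero) hf ht

theorem emb_cone (G : FinDigraph) (s : Fin G.n → Bool × Bool) : Emb G (G.cone s) :=
  ⟨Fin.succEmb _, fun _ _ => rfl⟩

theorem exists_iso_cone {w : Fin G.n} (hn : 2 ≤ G.n) (hw : G.adj w w = true)
    (huniq : ∀ u, G.adj u u = true → u = w) :
    ∃ H s, Loopless H ∧ Iso G (H.cone s) := by
  obtain ⟨n, hpos, adj⟩ := G
  obtain ⟨k, rfl⟩ : ∃ k, n = k + 2 := ⟨n - 2, (Nat.sub_add_cancel hn).symm⟩
  let f : Fin (k + 1) ↪ Fin (k + 2) := Fin.succAboveEmb w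
  let G : FinDigraph := ⟨k + 2, hpos, adj⟩
  have hcone : Emb ((G.induce f).cone fun u => (adj w (f u), adj (f u) w)) G :=
    cone_emb_of_forall_eq _ w hw f (fun u => Fin.succAbove_ne w u) (fun _ _ => rfl) fun _ => rfl
  refine ⟨G.induce f, _, fun u => ?_, iso_symm (hcone.iso_of_card_le le_rfl)⟩
  exact Bool.eq_false_iff.2 fun hu => Fin.succAbove_ne w u (huniq _ hu)

theorem loopless_iff : Loopless G ↔ ¬ Emb (point true) G := by
  simp [point_emb_iff, Loopless]

theorem FixesUpTo.loopless_iff {k : ℕ} (he : FixesUpTo e (k + 1)) (h : Sends e G H) :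
    Loopless G ↔ Loopless H := by
  rw [FinDigraph.loopless_iff, FinDigraph.loopless_iff,
    (he (point true) (Nat.le_add_left 1 k)).emb_iff h]

theorem Loopless.cone_adj_self_iff (hG : Loopless G) {s : Fin G.n → Bool × Bool}
    {u : Fin (G.n + 1)} : (G.cone s).adj u u = true ↔ u = 0 := by
  cases u using Fin.cases with
  | zero => exact iff_of_true rfl rfl
  | succ u => exact iff_of_false (Bool.eq_false_iff.1 (hG u)) u.succ_ne_zero

theorem Loopless.emb_of_emb_cone (hG : Loopless G) {t : Fin H.n → Bool × Bool}
    (h : Emb G (H.cone t)) : Emb G H := by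
  obtain ⟨(f : Fin G.n ↪ Fin (H.n + 1)), hf⟩ := h
  replace hf {i j : Fin G.n} {i' j' : Fin (H.n + 1)} (hi : f i = i') (hj : f j = j') :
      (H.cone t).adj i' j' = G.adj i j := by
    subst hi hj
    exact hf i j
  have hf0 (u : Fin G.n) : f u ≠ 0 := fun hu =>
    Bool.noConfusion (show true = false from (hf hu hu).trans (hG u))
  choose g hg using fun u => Fin.exists_succ_eq.2 (hf0 u)
  exact ⟨⟨g, fun u v huv => f.injective (by rw [← hg, ← hg, huv])⟩,
    fun u v => hf (hg u).symm (hg v).symm⟩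

theorem exists_sends_cone (he : FixesUpTo e 2) (hG : Loopless G) (hn : G.n + 1 ≤ m)
    (s : Fin G.n → Bool × Bool) :
    ∃ H t, Loopless H ∧ Sends e G H ∧ Sends e (G.cone s) (H.cone t) := by
  obtain ⟨K, hK⟩ := exists_sends e (G := G.cone s) hn
  obtain ⟨w, hw⟩ : ∃ w, K.adj w w = true := point_emb_iff.1 <|
    ((he (point true) (by decide)).emb_iff hK).1 (point_emb_iff.2 ⟨(0 : Fin (G.n + 1)), rfl⟩)
  have huniq (u) (hu : K.adj u u = true) : u = w := by
    by_contra huw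
    have hE := ((he (dyad true true _) le_rfl).emb_iff hK).2
      (dyad_emb_iff.2 ⟨u, w, huw, hu, hw, rfl⟩)
    obtain ⟨i, j, hij, hi, hj, -⟩ := dyad_emb_iff.1 hE
    exact hij ((hG.cone_adj_self_iff.1 hi).trans (hG.cone_adj_self_iff.1 hj).symm)
  have hKn : K.n = G.n + 1 := hK.n_eq
  obtain ⟨H, t, hH, hKH⟩ := exists_iso_cone (by have := G.pos; omega) hw huniq
  replace hK := hK.congr (iso_refl _) hKH
  obtain ⟨G', hG', hE⟩ := hK.exists_emb (emb_cone G s)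
  have hHn : H.n + 1 = G.n + 1 := hK.n_eq
  have hiso : Iso G' H := (((he.loopless_iff hG').1 hG).emb_of_emb_cone hE).iso_of_card_le
    (by rw [hG'.n_eq]; omega)
  exact ⟨H, t, hH, hG'.congr (iso_refl _) hiso, hK⟩

theorem exists_sends_cone_self (he : FixesUpTo e 2) (hG : Loopless G) (hfix : Sends e G G)
    (hn : G.n + 1 ≤ m) (s : Fin G.n → Bool × Bool) : ∃ t, Sends e (G.cone s) (G.cone t) := by
  obtain ⟨H, t, hH, hGH, hs⟩ := exists_sends_cone he hG hn s
  obtain ⟨f, hf⟩ := hfix.iso_right hGH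
  have hE : Emb (G.cone (t ∘ f)) (H.cone t) :=
    (cone_emb_cone_iff hH).2 ⟨f.toEmbedding, hf, fun _ => rfl⟩
  exact ⟨t ∘ f, hs.congr (iso_refl _) (iso_symm (hE.iso_of_card_le hs.n_eq.le))⟩

theorem point_cone_emb_iff (hG : Loopless G) {s : Fin G.n → Bool × Bool} {x : Bool × Bool} :
    Emb ((point false).cone fun _ => x) (G.cone s) ↔ x ∈ Set.range s := by
  rw [cone_emb_cone_iff hG]
  constructor
  · rintro ⟨f, -, hf⟩
    exact ⟨_, hf (0 : Fin 1)⟩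
  · rintro ⟨u, hu⟩
    exact ⟨⟨fun _ => u, fun _ _ _ => Subsingleton.elim (α := Fin 1) _ _⟩, fun _ _ => hG u,
      fun _ => hu⟩

theorem FixesUpTo.range_eq_of_sends_cone (he : FixesUpTo e 2) (hG : Loopless G) (hH : Loopless H)
    {s : Fin G.n → Bool × Bool} {t : Fin H.n → Bool × Bool}
    (h : Sends e (G.cone s) (H.cone t)) : Set.range s = Set.range t := by
  ext x
  rw [← point_cone_emb_iff hG, ← point_cone_emb_iff hH]
  exact (he _ le_rfl).emb_iff h

end Cone

section Rigidity

variable {m : ℕ} {e : Dn m ≃o Dn m} {A G H : FinDigraph}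

/-- The digraph `G` has exactly one induced subdigraph isomorphic to `A`. -/
def UniquelyEmbeds (A G : FinDigraph) : Prop :=
  Emb A G ∧ ∀ f g : Fin A.n ↪ Fin G.n, (∀ u v, G.adj (f u) (f v) = A.adj u v) →
    (∀ u v, G.adj (g u) (g v) = A.adj u v) → Set.range f = Set.range g

/-- Three vertices of which one pair is joined in both directions, one not at all, and one by the
edges `t`; all of them have loops if `a` holds. -/
def hook (a : Bool) (t : Bool × Bool) : FinDigraph :=
  ⟨3, three_pos, ![![a, true, t.1], ![true, a, false], ![t.2, false, a]]⟩

theorem loopless_hook {t : Bool × Bool} : Loopless (hook false t) := by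
  change ∀ u : Fin 3, _
  simp [Fin.forall_fin_succ, hook]

theorem flip_hook {a : Bool} {t : Bool × Bool} :
    Multiplicative.ofAdd (1 : ZMod 2) • hook (!a) t = hook a t :=
  mk_adj_congr (by simp [Fin.forall_fin_succ, hook])

theorem Loopless.of_emb (hH : Loopless H) (h : Emb G H) : Loopless G := by
  obtain ⟨f, hf⟩ := h
  exact fun u => (hf u u).symm.trans (hH _)

theorem range_fin_two {β : Type*} (f : Fin 2 → β) : Set.range f = {f 0, f 1} := by
  ext
  simp [Fin.exists_fin_two, eq_comm]

theorem dyad_emb_hook (a : Bool) (t : Bool × Bool) : Emb (dyad a a t) (hook a (true, false)) :=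
  dyad_emb_iff.2 <| match t with
    | (true, true) => ⟨(0 : Fin 3), (1 : Fin 3), show (0 : Fin 3) ≠ 1 by decide, rfl, rfl, rfl⟩
    | (false, false) => ⟨(1 : Fin 3), (2 : Fin 3), show (1 : Fin 3) ≠ 2 by decide, rfl, rfl, rfl⟩
    | (true, false) => ⟨(0 : Fin 3), (2 : Fin 3), show (0 : Fin 3) ≠ 2 by decide, rfl, rfl, rfl⟩
    | (false, true) => ⟨(2 : Fin 3), (0 : Fin 3), show (2 : Fin 3) ≠ 0 by decide, rfl, rfl, rfl⟩

theorem uniquelyEmbeds_hook (hA : Loopless A) (hn : A.n = 2) :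
    UniquelyEmbeds A (hook false (true, false)) := by
  let h : Fin 3 → Fin 3 → Bool := (hook false (true, false)).adj
  have hunique : ∀ i j k l, i ≠ j → k ≠ l → (h i j, h j i) = (h k l, h l k) →
      i = k ∧ j = l ∨ i = l ∧ j = k := by
    decide
  constructor
  · obtain ⟨a, b, t, hiso⟩ := exists_iso_dyad hn
    have hl := hA.of_emb (iso_symm hiso).emb
    obtain rfl : a = false := hl (0 : Fin 2)
    obtain rfl : b = false := hl (1 : Fin 2)
    exact hiso.emb.trans (dyad_emb_hook false t)
  · obtain ⟨n, hpos, adj⟩ := A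
    obtain rfl : n = 2 := hn
    intro (f : Fin 2 ↪ Fin 3) (g : Fin 2 ↪ Fin 3) hf hg
    have hfg := hunique _ _ _ _ (f.injective.ne Fin.zero_ne_one) (g.injective.ne Fin.zero_ne_one)
      (Prod.ext ((hf 0 1).trans (hg 0 1).symm) ((hf 1 0).trans (hg 1 0).symm))
    calc Set.range f = {f 0, f 1} := range_fin_two f
      _ = {g 0, g 1} := Set.pair_eq_pair_iff.2 hfg
      _ = Set.range g := (range_fin_two g).symm

theorem UniquelyEmbeds.image_range_eq (hA : UniquelyEmbeds A G) (he : FixesUpTo e 2)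
    (hG : Loopless G) (hn : A.n ≤ 2) {f : Fin A.n ↪ Fin G.n}
    (hf : ∀ u v, G.adj (f u) (f v) = A.adj u v) {s t : Fin G.n → Bool × Bool}
    (h : Sends e (G.cone s) (G.cone t)) : s '' Set.range f = t '' Set.range f := by
  have hAl : Loopless A := hG.of_emb hA.1
  have hm : A.n + 1 ≤ m := (Nat.succ_le_succ hA.1.card_le).trans h.1
  obtain ⟨t', ht'⟩ := exists_sends_cone_self he hAl (he A hn) hm (s ∘ f)
  obtain ⟨g, hg, htg⟩ := (cone_emb_cone_iff hG).1 <|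
    (ht'.emb_iff h).1 ((cone_emb_cone_iff hG).2 ⟨f, hf, fun _ => rfl⟩)
  calc s '' Set.range f = Set.range (s ∘ f) := (Set.range_comp s f).symm
    _ = Set.range t' := he.range_eq_of_sends_cone hAl hAl ht'
    _ = Set.range (t ∘ g) := congrArg Set.range (funext htg).symm
    _ = t '' Set.range f := by rw [Set.range_comp, hA.2 f g hf hg]

theorem eq_of_sends_cone_hook (he : FixesUpTo e 2) {s t : Fin 3 → Bool × Bool}
    (h : Sends e ((hook false (true, false)).cone s) ((hook false (true, false)).cone t)) :
    s = t := by
  have hpair (i j : Fin 3) (hij : i ≠ j) : ({s i, s j} : Set (Bool × Bool)) = {t i, t j} := by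
    let f : Fin 2 ↪ Fin 3 := .embFinTwo hij
    have himage : s '' Set.range f = t '' Set.range f :=
      (uniquelyEmbeds_hook (loopless_hook.of_emb (induce_emb _ f)) rfl).image_range_eq
        he loopless_hook le_rfl (f := f) (fun _ _ => rfl) h
    rw [range_fin_two, Set.image_pair, Set.image_pair] at himage
    exact himage
  have h01 := hpair 0 1 (by decide)
  have h02 := hpair 0 2 (by decide)
  have h12 := hpair 1 2 (by decide)
  rw [Set.pair_eq_pair_iff] at h01 h02 h12
  funext i
  fin_cases i <;> grind

theorem UniquelyEmbeds.sends_cone (hA : UniquelyEmbeds A G) (he : FixesUpTo e 2)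
    (hG : Loopless G) (hfix : ∀ s, Sends e (G.cone s) (G.cone s)) (hn : A.n ≤ 2)
    (s : Fin A.n → Bool × Bool) : Sends e (A.cone s) (A.cone s) := by
  have hAl : Loopless A := hG.of_emb hA.1
  obtain ⟨f, hf⟩ := hA.1
  let r : Fin G.n → Bool × Bool := Function.extend f s fun _ => (false, false)
  have hr (u) : r (f u) = s u := f.injective.extend_apply ..
  have hm : A.n + 1 ≤ m := (Nat.succ_le_succ hA.1.card_le).trans (hfix r).1
  obtain ⟨t, ht⟩ := exists_sends_cone_self he hAl (he A hn) hm s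
  obtain ⟨g, hg, htg⟩ := (cone_emb_cone_iff hG).1 <|
    (ht.emb_iff (hfix r)).1 ((cone_emb_cone_iff hG).2 ⟨f, hf, hr⟩)
  choose p hp using fun u => hA.2 f g hf hg ▸ Set.mem_range_self (f := g) u
  have hE : Emb (A.cone t) (A.cone s) := (cone_emb_cone_iff hAl).2
    ⟨⟨p, fun u v huv => g.injective (by rw [← hp, ← hp, huv])⟩,
      fun u v => (hf (p u) (p v)).symm.trans (by rw [hp, hp, hg]),
      fun u => (hr (p u)).symm.trans (by rw [hp, htg])⟩
  exact ht.congr (iso_refl _) (hE.iso_of_card_le le_rfl)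

/-- With at most four vertices, `G` has a colouring with distinct colours, so that `G` can be
recovered from its cone and the cones over its pairs of vertices. -/
theorem Loopless.sends_of_sends_cone (hG : Loopless G) (he : FixesUpTo e 2)
    (hfix : ∀ A, Loopless A → A.n = 2 → ∀ s, Sends e (A.cone s) (A.cone s)) (hn : G.n ≤ 4)
    (hm : G.n + 1 ≤ m) : Sends e G G := by
  obtain ⟨s⟩ : Nonempty (Fin G.n ↪ Bool × Bool) :=
    Function.Embedding.nonempty_of_card_le (by simpa using hn)
  obtain ⟨H, t, hH, hGH, hst⟩ := exists_sends_cone he hG hm s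
  choose p hp using fun u =>
    (he.range_eq_of_sends_cone hG hH hst).le (Set.mem_range_self (f := s) u)
  have hpinj : Function.Injective p := fun u v huv => s.injective (by rw [← hp, ← hp, huv])
  have hpsurj : Function.Surjective p :=
    ((Fintype.bijective_iff_injective_and_card p).2 ⟨hpinj, by simp [hGH.n_eq]⟩).2
  have htinj : Function.Injective t := by
    intro u v huv
    obtain ⟨u, rfl⟩ := hpsurj u
    obtain ⟨v, rfl⟩ := hpsurj v
    rw [hp, hp, s.apply_eq_iff_eq] at huv
    rw [huv]
  have hadj (u v) : H.adj (p u) (p v) = G.adj u v := by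
    by_cases huv : u = v
    · subst huv
      rw [hH, hG]
    let f : Fin 2 ↪ Fin G.n := .embFinTwo huv
    have hA := hG.of_emb (induce_emb G f)
    obtain ⟨g, hg, htg⟩ := (cone_emb_cone_iff hH).1 <|
      ((hfix _ hA rfl (s ∘ f)).emb_iff hst).1
        ((cone_emb_cone_iff hG).2 ⟨f, fun _ _ => rfl, fun _ => rfl⟩)
    have hgp (i : Fin 2) : g i = p (f i) := htinj ((htg i).trans (hp _).symm)
    have := hg (0 : Fin 2) (1 : Fin 2)
    rw [hgp, hgp] at this
    exact this
  have hE : Emb G H := ⟨⟨p, hpinj⟩, hadj⟩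
  exact hGH.congr (iso_refl _) (iso_symm (hE.iso_of_card_le hGH.n_eq.le))

/-- `G` has at most one vertex with a loop. -/
def AtMostOneLoop (G : FinDigraph) : Prop :=
  ∀ u v, G.adj u u = true → G.adj v v = true → u = v

theorem AtMostOneLoop.sends (hG : AtMostOneLoop G) (hm : 4 ≤ m) (he : FixesUpTo e 2)
    (hhook : Sends e (hook false (true, false)) (hook false (true, false))) (hn : G.n ≤ 3) :
    Sends e G G := by
  have hcone_hook (s) :
      Sends e ((hook false (true, false)).cone s) ((hook false (true, false)).cone s) := by
    obtain ⟨t, ht⟩ := exists_sends_cone_self he loopless_hook hhook hm s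
    rwa [← eq_of_sends_cone_hook he ht] at ht
  have hcone (A) (hA : Loopless A) (hn : A.n = 2) (s) : Sends e (A.cone s) (A.cone s) :=
    (uniquelyEmbeds_hook hA hn).sends_cone he loopless_hook hcone_hook hn.le s
  by_cases hl : Loopless G
  · exact hl.sends_of_sends_cone he hcone (by omega) (by omega)
  by_cases hn2 : G.n ≤ 2
  · exact he G hn2
  simp only [Loopless, not_forall, Bool.not_eq_false] at hl
  obtain ⟨w, hw⟩ := hl
  obtain ⟨H, s, hH, hGH⟩ := exists_iso_cone (by omega) hw fun u hu => hG u w hu hw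
  have hHn : G.n = H.n + 1 := hGH.card_eq
  exact (hcone H hH (by omega) s).congr (iso_symm hGH) (iso_symm hGH)

theorem atMostOneLoop_or_atMostOneLoop_flip (hn : G.n ≤ 3) :
    AtMostOneLoop G ∨ AtMostOneLoop (Multiplicative.ofAdd (1 : ZMod 2) • G) := by
  by_contra! h
  simp only [AtMostOneLoop, not_forall] at h
  obtain ⟨⟨u, v, hu, hv, huv⟩, (w : Fin G.n), (x : Fin G.n), hw, hx, hwx⟩ := h
  rw [flip_adj_self, Bool.not_eq_true'] at hw hx
  have hne {y z : Fin G.n} (hy : G.adj y y = true) (hz : G.adj z z = false) : y ≠ z := by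
    rintro rfl
    exact Bool.noConfusion (hy.symm.trans hz)
  have huw := hne hu hw
  have hux := hne hu hx
  have hvw := hne hv hw
  have hvx := hne hv hx
  omega

theorem fixesUpTo_three (hm : 4 ≤ m) (he : FixesUpTo e 2)
    (hhook : ∀ a, Sends e (hook a (true, false)) (hook a (true, false))) : FixesUpTo e 3 := by
  intro G hG
  obtain hl | hl := atMostOneLoop_or_atMostOneLoop_flip hG
  · exact hl.sends hm he (hhook false) hG
  · rw [← sends_conj_levelHom (Multiplicative.ofAdd (1 : ZMod 2))]
    refine hl.sends hm (he.conj_levelHom _) ?_ hG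
    rw [← flip_hook, sends_conj_levelHom]
    exact hhook true

end Rigidity

section Twist

variable {m : ℕ} {e : Dn m ≃o Dn m} {a : Bool} {t : Bool × Bool} {G : FinDigraph}

theorem hook_emb {i j k : Fin G.n} (hij : i ≠ j) (hik : i ≠ k) (hjk : j ≠ k)
    (hi : G.adj i i = a) (hj : G.adj j j = a) (hk : G.adj k k = a)
    (hboth : G.adj i j = true ∧ G.adj j i = true) (hnone : G.adj j k = false ∧ G.adj k j = false) :
    Emb (hook a (G.adj i k, G.adj k i)) G := by
  refine ⟨⟨![i, j, k], ?_⟩, ?_⟩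
  · simp [Function.Injective, hook, Fin.forall_fin_succ, hij, hik, hjk, hij.symm, hik.symm,
      hjk.symm]
  · change ∀ u v : Fin 3, G.adj (![i, j, k] u) (![i, j, k] v) = (hook a _).adj u v
    simp [Fin.forall_fin_succ, hook, hi, hj, hk, hboth, hnone]

theorem exists_iso_hook (hn : G.n = 3) (h : ∀ t, Emb (dyad a a t) G) :
    ∃ t : Bool × Bool, t.1 ≠ t.2 ∧ Iso G (hook a t) := by
  obtain ⟨n, hpos, adj⟩ := G
  obtain rfl : n = 3 := hn
  replace h (b c : Bool) : ∃ u v : Fin 3, u ≠ v ∧ adj u u = a ∧ adj v v = a ∧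
      adj u v = b ∧ adj v u = c := by
    simpa [dyad_emb_iff] using h (b, c)
  have hcover : ∀ x y z w : Fin 3, x ≠ y → z ≠ w → x = z ∨ x = w ∨ y = z ∨ y = w := by decide
  obtain ⟨x, y, hxy, hx, hy, hboth⟩ := h true true
  obtain ⟨z, w, hzw, hz, hw, hnone⟩ := h false false
  obtain ⟨u, v, -, -, -, hsingle⟩ := h true false
  obtain ⟨i, j, k, hij, hjk, hi, hj, hk, hbothij, hnonejk⟩ : ∃ i j k : Fin 3, i ≠ j ∧ j ≠ k ∧
      adj i i = a ∧ adj j j = a ∧ adj k k = a ∧ (adj i j = true ∧ adj j i = true) ∧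
        (adj j k = false ∧ adj k j = false) := by
    obtain rfl | rfl | rfl | rfl := hcover x y z w hxy hzw
    · exact ⟨y, x, w, hxy.symm, hzw, hy, hx, hw, hboth.symm, hnone⟩
    · exact ⟨y, x, z, hxy.symm, hzw.symm, hy, hx, hz, hboth.symm, hnone.symm⟩
    · exact ⟨x, y, w, hxy, hzw, hx, hy, hw, hboth, hnone⟩
    · exact ⟨x, y, z, hxy, hzw.symm, hx, hy, hz, hboth, hnone.symm⟩
  have hik : i ≠ k := by
    rintro rfl
    simp [hbothij] at hnonejk
  refine ⟨(adj i k, adj k i), ?_, iso_symm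
    ((hook_emb hij hik hjk hi hj hk hbothij hnonejk).iso_of_card_le le_rfl)⟩
  have hcases (p : Fin 3) : p = i ∨ p = j ∨ p = k := by omega
  intro (hsymm : adj i k = adj k i)
  have hadj_symm : adj u v = adj v u := by
    obtain rfl | rfl | rfl := hcases u <;> obtain rfl | rfl | rfl := hcases v <;>
      simp only [hbothij, hnonejk, hsymm]
  simp [hsingle] at hadj_symm

theorem exists_sends_hook (hm : 3 ≤ m) (he : FixesUpTo e 2) (a : Bool) :
    ∃ r, Sends e (hook a (true, false)) (hook a (toggle 0 r (true, false))) := by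
  obtain ⟨K, hK⟩ := exists_sends e (G := hook a (true, false)) hm
  obtain ⟨t, ht, hKt⟩ := exists_iso_hook hK.n_eq fun t =>
    ((he (dyad a a t) le_rfl).emb_iff hK).1 (dyad_emb_hook a t)
  obtain ⟨r, rfl⟩ : ∃ r, t = toggle 0 r (true, false) := by
    clear hKt
    revert t
    decide
  exact ⟨r, hK.congr (iso_refl _) hKt⟩

/-- The recolouring that reverses the single edges between vertices without loops if `r = 1`, and
those between vertices with loops if `s = 1`. -/
def twist (r s : ZMod 2) : Recoloring :=
  (Multiplicative.ofAdd (0, 0, r, s), 1)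

theorem twist_smul_hook (r s : ZMod 2) :
    twist r s • hook a t = hook a (toggle 0 (if a then s else r) t) :=
  mk_adj_congr fun (u v : Fin 3) => by
    fin_cases u <;> fin_cases v <;> cases a <;>
      first | rfl | exact congrArg Prod.fst (toggle_swap 0 _ t)

theorem toggle_zero_eq_or_eq_swap (r : ZMod 2) (t : Bool × Bool) :
    toggle 0 r t = t ∨ toggle 0 r t = t.swap := by
  revert r t; decide

theorem fixesUpTo_two_twist (hm : 2 ≤ m) (r s : ZMod 2) :
    FixesUpTo (levelHom Recoloring m (twist r s)) 2 := by
  refine fixesUpTo_two (fun a => ?_) fun a b t => ?_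
  · have h := sends_levelHom (twist r s) (G := point a) (show 1 ≤ m by omega)
    rwa [recolor_point] at h
  · have h := sends_levelHom (twist r s) (G := dyad a b t) hm
    rw [recolor_dyad] at h
    refine h.congr (iso_refl _) ?_
    match a, b with
    | false, false => exact iso_dyad_self_iff.2 (toggle_zero_eq_or_eq_swap r t)
    | true, true => exact iso_dyad_self_iff.2 (toggle_zero_eq_or_eq_swap s t)
    | true, false => exact iso_refl _
    | false, true => exact iso_refl _

theorem exists_restrictHom_eq_twist (hm : 4 ≤ m) (he : FixesUpTo e 2) :
    ∃ r s, restrictHom (by omega : 3 ≤ m) e = levelHom Recoloring 3 (twist r s) := by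
  choose r hr using exists_sends_hook (by omega : 3 ≤ m) he
  let c := levelHom Recoloring m (twist (r false) (r true))
  have hc : FixesUpTo c 2 := fixesUpTo_two_twist (by omega) _ _
  have hhook (a : Bool) :
      Sends c (hook a (true, false)) (hook a (toggle 0 (r a) (true, false))) := by
    have h := sends_levelHom (twist (r false) (r true)) (G := hook a (true, false))
      (show 3 ≤ m by omega)
    rw [twist_smul_hook] at h
    cases a <;> exact h
  have hfix : FixesUpTo (c⁻¹ * e) 3 := fixesUpTo_three hm
    (fun G hG => (he G hG).mul (hc G hG).symm) fun a => (hr a).mul (hhook a).symm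
  refine ⟨r false, r true, ?_⟩
  rw [← restrictHom_eq_one (h := by omega), map_mul, map_inv, inv_mul_eq_one] at hfix
  exact hfix.symm

end Twist

section Structure

variable {m : ℕ} {e : Dn m ≃o Dn m} {c : Recoloring}

theorem exists_flip (hm : 1 ≤ m) (e : Dn m ≃o Dn m) :
    ∃ b : Multiplicative (ZMod 2), ∀ a, Sends ((levelHom _ m b)⁻¹ * e) (point a) (point a) := by
  obtain ⟨a, ha⟩ := exists_sends_point e hm false
  cases a with
  | false => exact ⟨1, sends_point_of_false hm (by simpa using ha)⟩
  | true =>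
    have hflip := sends_levelHom (Multiplicative.ofAdd (1 : ZMod 2)) (G := point false) hm
    rw [flip_point] at hflip
    exact ⟨_, sends_point_of_false hm (ha.mul hflip.symm)⟩

theorem exists_recoloring (hm : 3 ≤ m) (he : ∀ a, Sends e (point a) (point a)) :
    ∃ c : Recoloring, FixesUpTo ((levelHom _ m c)⁻¹ * e) 2 := by
  obtain ⟨c, hc⟩ := exists_sends_dyad_recolorPair hm he
  refine ⟨c, fixesUpTo_two (fun a => ?_) fun a b t => ?_⟩
  · have h := sends_levelHom c (G := point a) (show 1 ≤ m by omega)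
    rw [recolor_point] at h
    exact (he a).mul h.symm
  · have h := sends_levelHom c (G := dyad a b t) (show 2 ≤ m by omega)
    rw [recolor_dyad] at h
    exact (hc a b t).mul h.symm

theorem toggle_eq_zero {p r : ZMod 2} (h : toggle p r (false, false) = (false, false)) : p = 0 := by
  revert p r
  decide

theorem exists_eq_twist (hm : 2 ≤ m) (hc : FixesUpTo (levelHom Recoloring m c) 2) :
    ∃ r s, c = twist r s := by
  have hdyad (a b : Bool) (t : Bool × Bool) :
      Iso (dyad a b (recolorPair c a b t)) (dyad a b t) := by
    rw [← recolor_dyad]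
    exact (sends_levelHom c hm).iso_right (hc (dyad a b t) le_rfl)
  obtain ⟨⟨p, q, r, s⟩, π⟩ := c
  have hp : p = 0 :=
    toggle_eq_zero (or_self_iff.1 (iso_dyad_self_iff.1 (hdyad false false (false, false))))
  have hq : q = 0 :=
    toggle_eq_zero (or_self_iff.1 (iso_dyad_self_iff.1 (hdyad true true (false, false))))
  have hπ : π = 1 := Equiv.ext fun t => by
    simpa [recolorPair] using iso_dyad_iff.1 (hdyad true false t)
  exact ⟨r, s, by rw [hp, hq, hπ]; rfl⟩

theorem not_iso_hook {a : Bool} : ¬ Iso (hook a (false, true)) (hook a (true, false)) := by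
  revert a
  change ∀ a, ¬ ∃ e : Fin 3 ≃ Fin 3, ∀ u v : Fin 3,
    (![![a, true, true], ![true, a, false], ![false, false, a]] : Fin 3 → Fin 3 → Bool)
      (e u) (e v) =
    (![![a, true, false], ![true, a, false], ![true, false, a]] : Fin 3 → Fin 3 → Bool) u v
  decide

theorem levelHom_recoloring_injective (hm : 3 ≤ m) :
    Function.Injective (levelHom Recoloring m) := by
  rw [injective_iff_map_eq_one]
  intro c hc
  have hfix (G : FinDigraph) (hG : G.n ≤ m) : Sends (levelHom Recoloring m c) G G :=
    hc ▸ sends_one hG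
  obtain ⟨r, s, rfl⟩ := exists_eq_twist (by omega) fun G hG => hfix G (by omega)
  have hhook (a : Bool) : (if a then s else r) = 0 := by
    have h := (sends_levelHom (twist r s) hm).iso_right (hfix (hook a (true, false)) hm)
    rw [twist_smul_hook] at h
    by_contra hne
    obtain hx : (if a then s else r) = 1 := Fin.eq_one_of_ne_zero _ hne
    rw [hx] at h
    exact not_iso_hook h
  obtain rfl : r = 0 := hhook false
  obtain rfl : s = 0 := hhook true
  rfl

variable {α : Multiplicative (ZMod 2) →* MulAut Recoloring}

theorem semidirectHom_injective (hα : ∀ c, α (Multiplicative.ofAdd 1) c = dual c) (hm : 3 ≤ m) :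
    Function.Injective (semidirectHom hα m) := by
  rw [injective_iff_map_eq_one]
  rintro ⟨c, b⟩ hg
  replace hg : levelHom Recoloring m c * levelHom _ m b = 1 := hg
  have hb : b = 1 := by
    have hpoint := (sends_levelHom b (G := point false) (show 1 ≤ m by omega)).mul
      (sends_levelHom c (show 1 ≤ m by omega))
    rw [hg] at hpoint
    have hiso := hpoint.iso_right (sends_one (show 1 ≤ m by omega))
    by_contra hb
    obtain rfl : b = Multiplicative.ofAdd 1 := Fin.eq_one_of_ne_zero _ hb
    rw [flip_point, recolor_point, iso_point_iff] at hiso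
    exact Bool.noConfusion hiso
  subst hb
  rw [map_one, mul_one] at hg
  obtain rfl := levelHom_recoloring_injective hm (hg.trans (map_one _).symm)
  rfl

theorem exists_semidirectHom_eq_restrictHom
    (hα : ∀ c, α (Multiplicative.ofAdd 1) c = dual c) (hm : 4 ≤ m) (e : Dn m ≃o Dn m) :
    ∃ g, semidirectHom hα 3 g = restrictHom (by omega) e := by
  obtain ⟨b, hb⟩ := exists_flip (by omega) e
  obtain ⟨c, hc⟩ := exists_recoloring (by omega) hb
  obtain ⟨r, s, hrs⟩ := exists_restrictHom_eq_twist hm hc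
  refine ⟨.inr b * .inl (c * twist r s), ?_⟩
  rw [map_mul, map_mul, map_inv, map_inv, restrictHom_levelHom, restrictHom_levelHom,
    inv_mul_eq_iff_eq_mul, inv_mul_eq_iff_eq_mul] at hrs
  rw [hrs, map_mul, semidirectHom, SemidirectProduct.lift_inr, SemidirectProduct.lift_inl, map_mul]

theorem range_semidirectHom (hα : ∀ c, α (Multiplicative.ofAdd 1) c = dual c) (hm : 4 ≤ m) :
    (semidirectHom hα 3).range = (restrictHom (by omega : 3 ≤ m)).range := by
  ext φ
  constructor
  · rintro ⟨g, rfl⟩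
    exact ⟨semidirectHom hα m g, restrictHom_semidirectHom hα _ g⟩
  · rintro ⟨e, rfl⟩
    exact exists_semidirectHom_eq_restrictHom hα hm e

theorem setOf_fixing_subset_range (hm : 4 ≤ m) :
    {φ ∈ (restrictHom (by omega : 3 ≤ m)).range | ∀ x : Dn 3, nVerts x ≤ 2 → φ x = x} ⊆
      Set.range fun x : ZMod 2 × ZMod 2 => levelHom Recoloring 3 (twist x.1 x.2) := by
  rintro _ ⟨⟨e, rfl⟩, he⟩
  have hfix : FixesUpTo e 2 := fun G hG =>
    ⟨by omega, congrArg Subtype.val (he ⟨toD G, hG.trans (by decide)⟩ hG)⟩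
  obtain ⟨r, s, hrs⟩ := exists_restrictHom_eq_twist hm hfix
  exact ⟨(r, s), hrs.symm⟩

end Structure

end FinDigraph

open FinDigraph in
theorem aut3D4_structure_general {m : ℕ} (hm : 4 ≤ m)
    (α : Multiplicative (ZMod 2) →* MulAut Recoloring)
    (hα : ∀ (p q r s : ZMod 2) (π : Equiv.Perm (Bool × Bool)),
      α (Multiplicative.ofAdd (1 : ZMod 2)) (Multiplicative.ofAdd (p, q, r, s), π)
        = (Multiplicative.ofAdd (q, p, s, r), sigmaSwap * π * sigmaSwap)) :
    let C := (restrictHom (by omega : 3 ≤ m)).range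
    Nonempty (C ≃* Recoloring ⋊[α] Multiplicative (ZMod 2)) ∧
      {φ ∈ (C : Set (Dn 3 ≃o Dn 3)) | ∀ x : Dn 3, nVerts x ≤ 2 → φ x = x}.Finite ∧
      {φ ∈ (C : Set (Dn 3 ≃o Dn 3)) | ∀ x : Dn 3, nVerts x ≤ 2 → φ x = x}.ncard ≤ 4 := by
  have hdual (c : Recoloring) : α (Multiplicative.ofAdd 1) c = dual c := hα ..
  have hrange := setOf_fixing_subset_range hm
  have hfinite := Set.finite_range fun x : ZMod 2 × ZMod 2 => levelHom Recoloring 3 (twist x.1 x.2)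
  refine ⟨⟨((MonoidHom.ofInjective (semidirectHom_injective hdual le_rfl)).trans
    (MulEquiv.subgroupCongr (range_semidirectHom hdual hm))).symm⟩, hfinite.subset hrange, ?_⟩
  exact (Set.ncard_le_ncard hrange hfinite).trans
    ((Finite.card_range_le _).trans_eq (by simp))

/-- the group `Aut₃(D₄)` is isomorphic to
`((ZMod 2)⁴ × Perm (Bool × Bool)) ⋊_α (ZMod 2)` with `α 1 : (p,q,r,s,π) ↦ (q,p,s,r,σπσ)`,
and at most four of its elements fix every digraph with at most 2 vertices. -/
theorem aut3D4_structure
    (α : Multiplicative (ZMod 2) →*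
      MulAut (Multiplicative (ZMod 2 × ZMod 2 × ZMod 2 × ZMod 2) × Equiv.Perm (Bool × Bool)))
    (hα : ∀ (p q r s : ZMod 2) (π : Equiv.Perm (Bool × Bool)),
      α (Multiplicative.ofAdd (1 : ZMod 2)) (Multiplicative.ofAdd (p, q, r, s), π)
        = (Multiplicative.ofAdd (q, p, s, r), sigmaSwap * π * sigmaSwap))
    (C : Subgroup (↥(Dn 3) ≃o ↥(Dn 3))) (hC : (C : Set (↥(Dn 3) ≃o ↥(Dn 3))) = Aut3D4Iso) :
    Nonempty (↥C ≃*
      (Multiplicative (ZMod 2 × ZMod 2 × ZMod 2 × ZMod 2) × Equiv.Perm (Bool × Bool))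
        ⋊[α] Multiplicative (ZMod 2)) ∧
    ({g ∈ Aut3D4Iso | ∀ x : ↥(Dn 3), nVerts ↑x ≤ 2 → g x = x}.Finite ∧
      {g ∈ Aut3D4Iso | ∀ x : ↥(Dn 3), nVerts ↑x ≤ 2 → g x = x}.ncard ≤ 4) := by
  obtain rfl : C = (FinDigraph.restrictHom (show 3 ≤ 4 by decide)).range :=
    SetLike.coe_injective (hC.trans FinDigraph.range_restrictHom.symm)
  rw [← hC]
  exact aut3D4_structure_general le_rfl α hα
end
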